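/- arXiv:2605.15234 — 7 statements merged into one kernel-verified Lean document; each statement's English description precedes it below -/
import Mathlib

section
/- The map 𝒮 sends positive semidefinite matrices to positive semidefinite matrices; moreover, its spectral radius ρ (the largest modulus of an eigenvalue of 𝒮 regarded as a ℂ-linear endomorphism of M_N) is itself an eigenvalue of 𝒮 admitting a nonzero positive semidefinite eigenmatrix: there exists Q ⪰ 0 with Q ≠ 0 such that 𝒮[Q] = ρ·Q. -/
open Matrix ComplexOrder ENNReal

noncomputable section

abbrev Mat (N : ℕ) := Matrix (Fin N) (Fin N) ℂ

/-- Real quadratic form `v* A v` (real part). -/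
def qf {N : ℕ} (A : Mat N) (v : Fin N → ℂ) : ℝ := (star v ⬝ᵥ A *ᵥ v).re

/-- The congruence map `Q ↦ Lᴴ Q L`. -/
def conjBy {N : ℕ} (L : Mat N) : Mat N →ₗ[ℂ] Mat N where
  toFun Q := Lᴴ * Q * L
  map_add' Q Q' := by simp [Matrix.mul_add, Matrix.add_mul]
  map_smul' a Q := by simp [Matrix.mul_smul, Matrix.smul_mul]

/-- The operator `𝒮[Q] = 𝒱[(L⁻¹)ᴴ Q L⁻¹]`. -/
def Smap {N : ℕ} (L : Mat N) (V : Mat N →ₗ[ℂ] Mat N) : Module.End ℂ (Mat N) :=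
  V ∘ₗ conjBy L⁻¹

/-- `P := sup_{Q ≻ 0} inf_{v ≠ 0} (v* L* Q L v)/(v* 𝒱[Q] v)`, valued in `[0,∞]`,
with the convention that a ratio with zero denominator and positive numerator is `∞`. -/
def Pval {N : ℕ} (L : Mat N) (V : Mat N →ₗ[ℂ] Mat N) : ℝ≥0∞ :=
  ⨆ Q : {Q : Mat N // Q.PosDef}, ⨅ v : {v : Fin N → ℂ // v ≠ 0},
    ENNReal.ofReal (qf (Lᴴ * Q.1 * L) v.1) / ENNReal.ofReal (qf (V Q.1) v.1)

/-- Spectral radius of a linear endomorphism of matrix space: the largest modulus of an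
eigenvalue. -/
def specRad {N : ℕ} (f : Module.End ℂ (Mat N)) : ℝ :=
  sSup {r : ℝ | ∃ μ : ℂ, f.HasEigenvalue μ ∧ r = ‖μ‖}

open Filter Topology

theorem summable_pow_aux {A : Type*} [NormedRing A] [NormedAlgebra ℂ A] [CompleteSpace A]
    (a : A) (t : ℝ) (ht : 0 < t) (h : spectralRadius ℂ a < ENNReal.ofReal t) :
    Summable fun n : ℕ => ‖a ^ n‖ * t⁻¹ ^ n := by
  have h1 : ((Real.toNNReal t⁻¹ : NNReal) : ℝ≥0∞) < (spectralRadius ℂ a)⁻¹ := by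
    have : ((Real.toNNReal t⁻¹ : NNReal) : ℝ≥0∞) = (ENNReal.ofReal t)⁻¹ := by
      rw [← ENNReal.ofReal_inv_of_pos ht]; rfl
    rw [this]
    exact ENNReal.inv_lt_inv.mpr h
  obtain ⟨r, hr1, hr2⟩ := ENNReal.lt_iff_exists_nnreal_btwn.mp h1
  have r_pos : 0 < r := lt_of_le_of_lt (by simp) (ENNReal.coe_lt_coe.mp hr1)
  have H₁ := (spectrum.differentiableOn_inverse_one_sub_smul hr2).hasFPowerSeriesOnBall r_pos
  have H₂ := ((spectrum.hasFPowerSeriesOnBall_inverse_one_sub_smul ℂ a).exchange_radius H₁).r_le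
  have H₃ := FormalMultilinearSeries.summable_norm_mul_pow _ (lt_of_lt_of_le hr1 H₂)
  simpa [ContinuousMultilinearMap.norm_mkPiRing, Real.coe_toNNReal _ (inv_pos.mpr ht).le] using H₃

section KR
variable {E : Type*} [NormedAddCommGroup E] [NormedSpace ℂ E] [FiniteDimensional ℂ E]

/-- Neumann series for the resolvent. -/
def resSer (T : E →L[ℂ] E) (z : ℂ) (P : E) : E := ∑' n : ℕ, z⁻¹ ^ (n + 1) • (T ^ n) P

theorem resSer_norm_summable (T : E →L[ℂ] E) (z : ℂ)
    (hs : Summable fun n : ℕ => ‖T ^ n‖ * ‖z‖⁻¹ ^ n) (P : E) :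
    Summable fun n : ℕ => ‖z⁻¹ ^ (n + 1) • (T ^ n) P‖ := by
  refine Summable.of_nonneg_of_le (fun _ => norm_nonneg _) (fun n => ?_)
    (hs.mul_left (‖z‖⁻¹ * ‖P‖))
  rw [norm_smul, norm_pow, norm_inv, pow_succ]
  have := (T ^ n).le_opNorm P
  calc ‖z‖⁻¹ ^ n * ‖z‖⁻¹ * ‖(T ^ n) P‖ ≤ ‖z‖⁻¹ ^ n * ‖z‖⁻¹ * (‖T ^ n‖ * ‖P‖) := by gcongr
    _ = _ := by ring

theorem resSer_summable (T : E →L[ℂ] E) (z : ℂ)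
    (hs : Summable fun n : ℕ => ‖T ^ n‖ * ‖z‖⁻¹ ^ n) (P : E) :
    Summable fun n : ℕ => z⁻¹ ^ (n + 1) • (T ^ n) P := by
  have : CompleteSpace E := FiniteDimensional.complete ℂ E
  exact (resSer_norm_summable T z hs P).of_norm

theorem resSer_eq (T : E →L[ℂ] E) (z : ℂ) (hz : z ≠ 0)
    (hs : Summable fun n : ℕ => ‖T ^ n‖ * ‖z‖⁻¹ ^ n) (P : E) :
    z • resSer T z P = P + T (resSer T z P) := by
  have h := resSer_summable T z hs P
  have h1 : resSer T z P = z⁻¹ • P + z⁻¹ • T (resSer T z P) := by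
    conv_lhs => rw [resSer, h.tsum_eq_zero_add]
    rw [resSer, T.map_tsum h, ← (T.summable h).tsum_const_smul]
    congr 1
    · simp
    · refine tsum_congr fun n => ?_
      rw [map_smul, smul_smul, pow_succ' T n, ← pow_succ' z⁻¹]
      rfl
  conv_lhs => rw [h1]
  rw [smul_add, smul_inv_smul₀ hz, smul_inv_smul₀ hz]

set_option maxHeartbeats 2000000 in
theorem krein_rutman (T : E →L[ℂ] E) (K : Set E) (hcl : IsClosed K) (h0 : (0 : E) ∈ K)
    (hadd : ∀ x ∈ K, ∀ y ∈ K, x + y ∈ K) (hsm : ∀ r : ℝ, 0 ≤ r → ∀ x ∈ K, (r : ℂ) • x ∈ K)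
    (hspan : Submodule.span ℂ K = ⊤) (φ : E →L[ℂ] ℂ)
    (hφ : ∀ x ∈ K, x ≠ 0 → 0 < (φ x).re) (hT : ∀ x ∈ K, T x ∈ K)
    (μ : ℂ) (X : E) (hX : X ≠ 0) (hTX : T X = μ • X)
    (hmax : ∀ (ν : ℂ) (y : E), y ≠ 0 → T y = ν • y → ‖ν‖ ≤ ‖μ‖)
    (hsum : ∀ t : ℝ, ‖μ‖ < t → Summable fun n : ℕ => ‖T ^ n‖ * t⁻¹ ^ n) :
    ∃ Q ∈ K, Q ≠ 0 ∧ T Q = ((‖μ‖ : ℝ) : ℂ) • Q := by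
  have : ProperSpace E := FiniteDimensional.proper ℂ E
  have hφ0 : ∀ x ∈ K, 0 ≤ (φ x).re := fun x hx => by
    by_cases h : x = 0
    · simp [h]
    · exact (hφ x hx h).le
  -- norm bound
  obtain ⟨C, hC0, hC⟩ : ∃ C : ℝ, 0 < C ∧ ∀ x ∈ K, ‖x‖ ≤ C * (φ x).re := by
    have hcomp : IsCompact (K ∩ Metric.sphere (0 : E) 1) := (isCompact_sphere _ _).inter_left hcl
    have hcont : ContinuousOn (fun x => (φ x).re) (K ∩ Metric.sphere (0 : E) 1) := by fun_prop
    have hnorm : ∀ x ∈ K, x ≠ 0 → (((‖x‖⁻¹ : ℝ) : ℂ) • x) ∈ K ∩ Metric.sphere (0 : E) 1 := by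
      intro x hx hx0
      refine ⟨hsm _ (by positivity) x hx, ?_⟩
      have : ‖x‖ ≠ 0 := norm_ne_zero_iff.mpr hx0
      simp [norm_smul, this]
    by_cases hne : (K ∩ Metric.sphere (0 : E) 1).Nonempty
    · obtain ⟨y, hy, hmin⟩ := hcomp.exists_isMinOn hne hcont
      have hy0 : y ≠ 0 := by
        rintro rfl
        simpa using hy.2
      have hpos := hφ y hy.1 hy0
      refine ⟨((φ y).re)⁻¹, inv_pos.mpr hpos, fun x hx => ?_⟩
      by_cases hx0 : x = 0
      · simp [hx0]
      have h1 := hmin (hnorm x hx hx0)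
      have h2 : (φ y).re ≤ ‖x‖⁻¹ * (φ x).re := by
        simpa [-Complex.ofReal_inv, Complex.re_ofReal_mul] using h1
      have hxp : 0 < ‖x‖ := norm_pos_iff.mpr hx0
      rw [inv_mul_eq_div, le_div_iff₀ hxp] at h2
      rw [inv_mul_eq_div, le_div_iff₀ hpos]
      linarith
    · refine ⟨1, one_pos, fun x hx => ?_⟩
      by_cases hx0 : x = 0
      · simp [hx0]
      · exact absurd ⟨_, hnorm x hx hx0⟩ hne
  have hpowK : ∀ n : ℕ, ∀ x ∈ K, (T ^ n) x ∈ K := by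
    intro n
    induction n with
    | zero => intro x hx; simpa using hx
    | succ k ih =>
      intro x hx
      rw [pow_succ']
      exact hT _ (ih x hx)
  have hs' : ∀ z : ℂ, ‖μ‖ < ‖z‖ → Summable fun n : ℕ => ‖T ^ n‖ * ‖z‖⁻¹ ^ n :=
    fun z hz => hsum _ hz
  have hnt : ∀ t : ℝ, ‖μ‖ < t → ‖(t : ℂ)‖ = t := fun t ht => by
    rw [Complex.norm_real, Real.norm_of_nonneg ((norm_nonneg μ).trans ht.le)]
  have hst : ∀ t : ℝ, ‖μ‖ < t → Summable fun n : ℕ => ‖T ^ n‖ * ‖(t : ℂ)‖⁻¹ ^ n := fun t ht => by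
    rw [hnt t ht]; exact hsum t ht
  have hterm : ∀ t : ℝ, ‖μ‖ < t → ∀ P ∈ K, ∀ n : ℕ, ((t : ℂ)⁻¹ ^ (n + 1) • (T ^ n) P) ∈ K := by
    intro t ht P hP n
    have ht0 : 0 ≤ t := (norm_nonneg μ).trans ht.le
    have := hsm (t⁻¹ ^ (n + 1)) (by positivity) _ (hpowK n P hP)
    simpa using this
  have hRK : ∀ t : ℝ, ‖μ‖ < t → ∀ P ∈ K, resSer T t P ∈ K := by
    intro t ht P hP
    refine hcl.mem_of_tendsto (resSer_summable T t (hst t ht) P).hasSum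
      (Eventually.of_forall fun s => ?_)
    induction s using Finset.induction_on with
    | empty => simpa using h0
    | insert a s ha ih =>
      rw [Finset.sum_insert ha]
      exact hadd _ (hterm t ht P hP a) _ ih
  have hbound : ∀ z : ℂ, ‖μ‖ < ‖z‖ → ∀ P ∈ K,
      ‖resSer T z P‖ ≤ C * (φ (resSer T (‖z‖ : ℝ) P)).re := by
    intro z hz P hP
    have hsz := resSer_norm_summable T z (hs' z hz) P
    have hst' := resSer_summable T ((‖z‖ : ℝ) : ℂ) (hst _ hz) P
    have hφs : HasSum (fun n : ℕ => C * (φ (((‖z‖ : ℝ) : ℂ)⁻¹ ^ (n + 1) • (T ^ n) P)).re)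
        (C * (φ (resSer T (‖z‖ : ℝ) P)).re) :=
      (Complex.hasSum_re (φ.hasSum hst'.hasSum)).mul_left C
    refine (norm_tsum_le_tsum_norm hsz).trans (hasSum_le (fun n => ?_) hsz.hasSum hφs)
    refine le_trans (le_of_eq ?_) (hC _ (hterm _ hz P hP n))
    simp [norm_smul]
  -- some P has unbounded resolvent
  obtain ⟨P, hP, hunb⟩ : ∃ P ∈ K, ∀ M : ℝ, ∃ t : ℝ, ‖μ‖ < t ∧ t ≤ ‖μ‖ + 1 ∧
      M < (φ (resSer T t P)).re := by
    by_contra hcon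
    push Not at hcon
    have hall : ∀ Y : E, ∃ M : ℝ, ∀ z : ℂ, ‖μ‖ < ‖z‖ → ‖z‖ ≤ ‖μ‖ + 1 → ‖resSer T z Y‖ ≤ M := by
      intro Y
      have hY : Y ∈ Submodule.span ℂ K := by rw [hspan]; trivial
      induction hY using Submodule.span_induction with
      | mem P hP =>
        obtain ⟨M, hM⟩ := hcon P hP
        refine ⟨C * M, fun z h1 h2 => (hbound z h1 P hP).trans ?_⟩
        exact mul_le_mul_of_nonneg_left (hM _ h1 h2) hC0.le
      | zero => exact ⟨0, fun z _ _ => by simp [resSer]⟩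
      | add x y _ _ hx hy =>
        obtain ⟨M, hM⟩ := hx
        obtain ⟨M', hM'⟩ := hy
        refine ⟨M + M', fun z h1 h2 => ?_⟩
        have : resSer T z (x + y) = resSer T z x + resSer T z y := by
          simp only [resSer, map_add, smul_add]
          exact (resSer_summable T z (hs' z h1) x).tsum_add (resSer_summable T z (hs' z h1) y)
        rw [this]
        exact (norm_add_le _ _).trans (add_le_add (hM z h1 h2) (hM' z h1 h2))
      | smul a x _ hx =>
        obtain ⟨M, hM⟩ := hx
        refine ⟨‖a‖ * M, fun z h1 h2 => ?_⟩
        have : resSer T z (a • x) = a • resSer T z x := by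
          simp only [resSer, map_smul]
          rw [← (resSer_summable T z (hs' z h1) x).tsum_const_smul]
          exact tsum_congr fun n => smul_comm _ _ _
        rw [this, norm_smul]
        exact mul_le_mul_of_nonneg_left (hM z h1 h2) (norm_nonneg a)
    obtain ⟨M, hM⟩ := hall X
    obtain ⟨u, hu, hμu⟩ : ∃ u : ℂ, ‖u‖ = 1 ∧ μ = (‖μ‖ : ℂ) * u := by
      by_cases hμ : μ = 0
      · exact ⟨1, by simp, by simp [hμ]⟩
      · have : (‖μ‖ : ℂ) ≠ 0 := by simpa using hμ
        refine ⟨μ / ‖μ‖, by simp [hμ], by field_simp⟩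
    have hTn : ∀ n : ℕ, (T ^ n) X = μ ^ n • X := by
      intro n
      induction n with
      | zero => simp
      | succ k ih =>
        rw [pow_succ']
        change T ((T ^ k) X) = _
        rw [ih, map_smul, hTX, smul_smul, pow_succ]
    have key : ∀ d : ℝ, 0 < d → d ≤ 1 → ‖X‖ ≤ d * M := by
      intro d hd hd1
      obtain ⟨z, hz⟩ : ∃ z : ℂ, z = ((‖μ‖ + d : ℝ) : ℂ) * u := ⟨_, rfl⟩
      have hzn : ‖z‖ = ‖μ‖ + d := by
        rw [hz, norm_mul, hu, mul_one, Complex.norm_real, Real.norm_of_nonneg (by positivity)]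
      have h1 : ‖μ‖ < ‖z‖ := by rw [hzn]; linarith
      have hz0 : z ≠ 0 := norm_pos_iff.mp ((norm_nonneg μ).trans_lt h1)
      have hsmz : Summable fun n : ℕ => z⁻¹ ^ (n + 1) * μ ^ n := by
        have hlt : ‖z⁻¹ * μ‖ < 1 := by
          rw [norm_mul, norm_inv, inv_mul_eq_div]
          exact (div_lt_one (norm_pos_iff.mpr hz0)).mpr h1
        have hg : Summable fun n : ℕ => z⁻¹ * (z⁻¹ * μ) ^ n :=
          (summable_geometric_of_norm_lt_one hlt).mul_left _
        have hfe : (fun n : ℕ => z⁻¹ ^ (n + 1) * μ ^ n) = fun n : ℕ => z⁻¹ * (z⁻¹ * μ) ^ n := by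
          funext n
          rw [mul_pow, pow_succ', mul_assoc]
        rw [hfe]
        exact hg
      have hcol : resSer T z X = (∑' n : ℕ, z⁻¹ ^ (n + 1) * μ ^ n) • X := by
        rw [resSer, ← hsmz.tsum_smul_const]
        exact tsum_congr fun n => by rw [hTn, smul_smul]
      have he := resSer_eq T z hz0 (hs' z h1) X
      have he2 : T (resSer T z X) = μ • resSer T z X := by
        rw [hcol, map_smul, hTX, smul_comm]
      have he3 : X = (z - μ) • resSer T z X := by
        rw [sub_smul, he, he2]; abel
      have hzμ : z - μ = (d : ℂ) * u := by
        rw [hz]; nth_rewrite 2 [hμu]; push_cast; ring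
      calc ‖X‖ = ‖z - μ‖ * ‖resSer T z X‖ := by rw [← norm_smul, ← he3]
        _ = d * ‖resSer T z X‖ := by
          rw [hzμ, norm_mul, hu, mul_one, Complex.norm_real, Real.norm_of_nonneg hd.le]
        _ ≤ d * M := mul_le_mul_of_nonneg_left (hM z h1 (by rw [hzn]; linarith)) hd.le
    have hXp : 0 < ‖X‖ := norm_pos_iff.mpr hX
    have hMp : 0 < M := by have := key 1 one_pos le_rfl; linarith
    have h2 := key (min 1 (‖X‖ / (2 * M))) (by positivity) (min_le_left _ _)
    have h3 : min 1 (‖X‖ / (2 * M)) * M ≤ ‖X‖ / (2 * M) * M :=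
      mul_le_mul_of_nonneg_right (min_le_right _ _) hMp.le
    have h4 : ‖X‖ / (2 * M) * M = ‖X‖ / 2 := by field_simp
    linarith
  choose t ht1 ht2 ht3 using fun k : ℕ => hunb (k + 1)
  set c : ℕ → ℝ := fun k => (φ (resSer T (t k) P)).re with hc
  have hcp : ∀ k, 0 < c k := fun k => lt_trans (by positivity) (ht3 k)
  set q : ℕ → E := fun k => (((c k)⁻¹ : ℝ) : ℂ) • resSer T (t k) P with hq
  have hqK : ∀ k, q k ∈ K := fun k => hsm _ (inv_pos.mpr (hcp k)).le _ (hRK _ (ht1 k) P hP)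
  have hqφ : ∀ k, (φ (q k)).re = 1 := fun k => by
    rw [hq]
    simp only [map_smul, smul_eq_mul, Complex.re_ofReal_mul]
    exact inv_mul_cancel₀ (hcp k).ne'
  have hqn : ∀ k, q k ∈ Metric.closedBall (0 : E) C := fun k => by
    have := hC _ (hqK k)
    rw [hqφ, mul_one] at this
    simpa using this
  have hqT : ∀ k, (t k : ℂ) • q k - T (q k) = (((c k)⁻¹ : ℝ) : ℂ) • P := fun k => by
    have ht0 : (t k : ℂ) ≠ 0 := by
      exact_mod_cast ((norm_nonneg μ).trans_lt (ht1 k)).ne'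
    have := resSer_eq T (t k) ht0 (hst _ (ht1 k)) P
    rw [hq]
    simp only [map_smul]
    rw [smul_comm, this, ← smul_sub, add_sub_cancel_right]
  obtain ⟨p, hp, f, hf, hlim⟩ :=
    ((isCompact_Icc (a := ‖μ‖) (b := ‖μ‖ + 1)).prod (isCompact_closedBall (0 : E) C)).tendsto_subseq
      (x := fun k => (t k, q k)) (fun k => ⟨⟨(ht1 k).le, ht2 k⟩, hqn k⟩)
  obtain ⟨s, Q⟩ := p
  have hls : Tendsto (fun k => t (f k)) atTop (𝓝 s) := (continuous_fst.tendsto _).comp hlim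
  have hlq : Tendsto (fun k => q (f k)) atTop (𝓝 Q) := (continuous_snd.tendsto _).comp hlim
  have hQK : Q ∈ K := hcl.mem_of_tendsto hlq (Eventually.of_forall fun k => hqK _)
  have hQφ : (φ Q).re = 1 := by
    have h1 : Tendsto (fun k => (φ (q (f k))).re) atTop (𝓝 (φ Q).re) :=
      ((Complex.continuous_re.comp φ.continuous).tendsto Q).comp hlq
    simp only [hqφ] at h1
    exact tendsto_nhds_unique h1 tendsto_const_nhds
  have hQ0 : Q ≠ 0 := by
    rintro rfl
    simp at hQφ
  have hcinf : Tendsto c atTop atTop := by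
    refine tendsto_atTop_mono (fun k => ?_) tendsto_natCast_atTop_atTop
    have := ht3 k
    simp only [hc]
    linarith
  have hlim0 : Tendsto (fun k => (((c (f k))⁻¹ : ℝ) : ℂ) • P) atTop (𝓝 0) := by
    have h1 : Tendsto (fun k => (c (f k))⁻¹) atTop (𝓝 0) :=
      tendsto_inv_atTop_zero.comp (hcinf.comp hf.tendsto_atTop)
    have h2 := ((Complex.continuous_ofReal.tendsto 0).comp h1).smul_const P
    simpa using h2
  have hlim1 : Tendsto (fun k => (t (f k) : ℂ) • q (f k) - T (q (f k))) atTop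
      (𝓝 ((s : ℂ) • Q - T Q)) :=
    (((Complex.continuous_ofReal.tendsto s).comp hls).smul hlq).sub ((T.continuous.tendsto Q).comp hlq)
  simp only [hqT] at hlim1
  have hTQ : T Q = (s : ℂ) • Q := (sub_eq_zero.mp (tendsto_nhds_unique hlim1 hlim0)).symm
  have hs1 : ‖μ‖ ≤ s := hp.1.1
  have hs2 := hmax _ Q hQ0 hTQ
  rw [Complex.norm_real, Real.norm_of_nonneg ((norm_nonneg μ).trans hs1)] at hs2
  have : s = ‖μ‖ := le_antisymm hs2 hs1
  exact ⟨Q, hQK, hQ0, by rw [← this]; exact hTQ⟩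

end KR

open scoped MatrixOrder Matrix.Norms.L2Operator in
theorem psd_perron {N : ℕ} (hN : 0 < N) (S : Module.End ℂ (Mat N))
    (hS : ∀ Q : Mat N, Q.PosSemidef → (S Q).PosSemidef) :
    ∃ Q : Mat N, Q.PosSemidef ∧ Q ≠ 0 ∧ S Q = (specRad S : ℂ) • Q := by
  have : NeZero N := ⟨hN.ne'⟩
  have : Nontrivial (Mat N) := inferInstance
  let T : Mat N →L[ℂ] Mat N := Module.End.toContinuousLinearMap (𝕜 := ℂ) (Mat N) S
  have hTS : ∀ x, T x = S x := fun _ => rfl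
  have hspec : spectrum ℂ T = spectrum ℂ S :=
    AlgEquiv.spectrum_eq (Module.End.toContinuousLinearMap (𝕜 := ℂ) (Mat N)) S
  have : CompleteSpace (Mat N →L[ℂ] Mat N) := inferInstance
  have : Nontrivial (Mat N →L[ℂ] Mat N) := inferInstance
  obtain ⟨μ, hμ, hr⟩ := spectrum.exists_nnnorm_eq_spectralRadius T
  have hle : ∀ ν : ℂ, S.HasEigenvalue ν → ‖ν‖ ≤ ‖μ‖ := by
    intro ν hν
    have h1 : ν ∈ spectrum ℂ T := by rw [hspec]; exact hν.mem_spectrum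
    have h2 : (‖ν‖₊ : ℝ≥0∞) ≤ spectralRadius ℂ T := le_iSup₂ (f := fun k (_ : k ∈ spectrum ℂ T) => (‖k‖₊ : ℝ≥0∞)) ν h1
    rw [← hr] at h2
    exact_mod_cast h2
  have hμe : S.HasEigenvalue μ := by
    rw [hspec] at hμ
    exact Module.End.hasEigenvalue_iff_mem_spectrum.mpr hμ
  have hρ : specRad S = ‖μ‖ := by
    refine IsGreatest.csSup_eq ⟨⟨μ, hμe, rfl⟩, ?_⟩
    rintro r ⟨ν, hν, rfl⟩
    exact hle ν hν
  obtain ⟨X, hX⟩ := hμe.exists_hasEigenvector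
  obtain ⟨Q, hQK, hQ0, hQ⟩ := krein_rutman T {a : Mat N | 0 ≤ a} CStarAlgebra.isClosed_nonneg
    (Matrix.nonneg_iff_posSemidef.mpr Matrix.PosSemidef.zero) (fun x hx y hy => Matrix.nonneg_iff_posSemidef.mpr
      ((Matrix.nonneg_iff_posSemidef.mp hx).add (Matrix.nonneg_iff_posSemidef.mp hy)))
    (fun r hr x hx => by
      have h : x.PosSemidef := Matrix.nonneg_iff_posSemidef.mp hx
      exact Matrix.nonneg_iff_posSemidef.mpr (h.smul (by exact_mod_cast hr)))
    CStarAlgebra.span_nonneg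
    (LinearMap.toContinuousLinearMap (Matrix.traceLinearMap (Fin N) ℂ ℂ))
    (fun x hx hx0 => by
      have h : x.PosSemidef := Matrix.nonneg_iff_posSemidef.mp hx
      have h1 := h.trace_nonneg
      have h2 : x.trace ≠ 0 := fun h3 => hx0 (h.trace_eq_zero_iff.mp h3)
      exact (Complex.pos_iff.mp (lt_of_le_of_ne h1 h2.symm)).1)
    (fun x hx => Matrix.nonneg_iff_posSemidef.mpr (hS x (Matrix.nonneg_iff_posSemidef.mp hx)))
    μ X hX.2 hX.apply_eq_smul
    (fun ν y hy hyν => hle ν (Module.End.hasEigenvalue_of_hasEigenvector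
      ⟨Module.End.mem_eigenspace_iff.mpr hyν, hy⟩))
    (fun t ht => by
      refine summable_pow_aux T t ((norm_nonneg μ).trans_lt ht) ?_
      rw [← hr, ← enorm_eq_nnnorm, ← ofReal_norm]
      exact (ENNReal.ofReal_lt_ofReal_iff ((norm_nonneg μ).trans_lt ht)).mpr ht)
  exact ⟨Q, Matrix.nonneg_iff_posSemidef.mp hQK, hQ0, by rw [hρ]; exact hQ⟩

/-- `𝒮` sends positive semidefinite matrices to positive semidefinite matrices,
and its spectral radius `ρ` is an eigenvalue of `𝒮` with a nonzero positive semidefinite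
eigenmatrix. -/
theorem stmt0 {N : ℕ} (hN : 0 < N) (L : Mat N) (hL : IsUnit L)
    (V : Mat N →ₗ[ℂ] Mat N)
    (hVherm : ∀ Q : Mat N, Q.IsHermitian → (V Q).IsHermitian)
    (hVpsd : ∀ Q : Mat N, Q.PosSemidef → (V Q).PosSemidef) :
    (∀ Q : Mat N, Q.PosSemidef → ((Smap L V) Q).PosSemidef) ∧
    ∃ Q : Mat N, Q.PosSemidef ∧ Q ≠ 0 ∧
      (Smap L V) Q = (specRad (Smap L V) : ℂ) • Q := by
  have h1 : ∀ Q : Mat N, Q.PosSemidef → ((Smap L V) Q).PosSemidef := fun Q hQ =>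
    hVpsd _ (hQ.conjTranspose_mul_mul_same L⁻¹)
  exact ⟨h1, psd_perron hN _ h1⟩

end
end

section
/- The quantity P equals the reciprocal of the spectral radius ρ of 𝒮 (the largest modulus of an eigenvalue of 𝒮 regarded as a ℂ-linear endomorphism of M_N): P = 1/ρ, with the convention 1/0 = ∞. -/
open Matrix ComplexOrder ENNReal

noncomputable section

open Filter Topology

lemma qf_add {N : ℕ} (A B : Mat N) (v) : qf (A + B) v = qf A v + qf B v := by
  simp [qf, Matrix.add_mulVec, dotProduct_add]
lemma qf_sub {N : ℕ} (A B : Mat N) (v) : qf (A - B) v = qf A v - qf B v := by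
  simp [qf, Matrix.sub_mulVec, dotProduct_sub]
lemma qf_smul {N : ℕ} (c : ℝ) (A : Mat N) (v) : qf ((c : ℂ) • A) v = c * qf A v := by
  simp [qf, Matrix.smul_mulVec, dotProduct_smul]
lemma qf_nonneg {N : ℕ} {A : Mat N} (h : A.PosSemidef) (v) : 0 ≤ qf A v :=
  (Complex.le_def.1 (h.dotProduct_mulVec_nonneg v)).1
lemma qf_pos {N : ℕ} {A : Mat N} (h : A.PosDef) {v} (hv : v ≠ 0) : 0 < qf A v :=
  (Complex.lt_def.1 (h.dotProduct_mulVec_pos hv)).1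
lemma herm_im {N : ℕ} {A : Mat N} (h : A.IsHermitian) (v : Fin N → ℂ) :
    (star v ⬝ᵥ A *ᵥ v).im = 0 := by
  have := h.im_star_dotProduct_mulVec_self v
  simpa using this
lemma psd_of_qf {N : ℕ} {A : Mat N} (h : A.IsHermitian) (hq : ∀ v, v ≠ 0 → 0 ≤ qf A v) :
    A.PosSemidef := by
  refine .of_dotProduct_mulVec_nonneg h fun v => ?_
  refine Complex.le_def.2 ⟨?_, (herm_im h v).symm⟩
  by_cases hv : v = 0
  · simp [hv]
  · exact hq v hv
lemma qf_one {N : ℕ} (v : Fin N → ℂ) : qf 1 v = ∑ i, ‖v i‖ ^ 2 := by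
  simp [qf, dotProduct, ← Complex.normSq_eq_norm_sq, Complex.normSq_apply]
lemma qf_bound {N : ℕ} (A : Mat N) (v) : ‖star v ⬝ᵥ A *ᵥ v‖ ≤ (∑ i, ∑ j, ‖A i j‖) * qf 1 v := by
  rw [qf_one, Finset.sum_mul]
  simp only [dotProduct, Matrix.mulVec]
  refine (norm_sum_le _ _).trans (Finset.sum_le_sum fun i _ => ?_)
  rw [Finset.mul_sum, Finset.sum_mul]
  refine (norm_sum_le _ _).trans (Finset.sum_le_sum fun j _ => ?_)
  have hi := Finset.single_le_sum (f := fun i => ‖v i‖ ^ 2) (fun i _ => by positivity) (Finset.mem_univ i)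
  have hj := Finset.single_le_sum (f := fun i => ‖v i‖ ^ 2) (fun i _ => by positivity) (Finset.mem_univ j)
  simp only [Pi.star_apply, norm_mul, norm_star] at *
  have : ‖v i‖ * ‖v j‖ ≤ ∑ i, ‖v i‖ ^ 2 := by nlinarith [sq_nonneg (‖v i‖ - ‖v j‖)]
  calc _ = ‖A i j‖ * (‖v i‖ * ‖v j‖) := by ring
    _ ≤ _ := by gcongr
lemma qf_conj {N : ℕ} (A B : Mat N) (v) : qf (Bᴴ * A * B) v = qf A (B *ᵥ v) := by
  simp [qf, ← Matrix.mulVec_mulVec, Matrix.star_mulVec, Matrix.dotProduct_mulVec, Matrix.vecMul_vecMul, Matrix.mul_assoc]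

open scoped MatrixOrder in
lemma one_le_W {N : ℕ} {W : Mat N} (hW : W.PosDef) : ∃ C, 0 ≤ C ∧ ∀ v, qf 1 v ≤ C * qf W v := by
  obtain ⟨B, hB, hWB⟩ : ∃ B : Mat N, IsUnit B ∧ W = Bᴴ * B := by
    obtain ⟨B, hB⟩ := CStarAlgebra.nonneg_iff_eq_star_mul_self.1 (Matrix.nonneg_iff_posSemidef.2 hW.posSemidef)
    rw [star_eq_conjTranspose] at hB
    refine ⟨B, ?_, hB⟩
    have := hW.isUnit
    rw [Matrix.isUnit_iff_isUnit_det, hB, Matrix.det_mul] at this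
    rw [Matrix.isUnit_iff_isUnit_det]
    exact isUnit_of_mul_isUnit_right this
  have hB' := (Matrix.isUnit_iff_isUnit_det B).1 hB
  refine ⟨∑ i, ∑ j, ‖((B⁻¹)ᴴ * 1 * B⁻¹ : Mat N) i j‖, by positivity, fun v => ?_⟩
  have h1 : qf W v = qf 1 (B *ᵥ v) := by rw [← qf_conj, hWB]; simp
  have h2 : qf 1 v = qf ((B⁻¹)ᴴ * 1 * B⁻¹) (B *ᵥ v) := by
    rw [qf_conj, Matrix.mulVec_mulVec, Matrix.nonsing_inv_mul _ hB', Matrix.one_mulVec]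
  rw [h1, h2]
  exact (Complex.re_le_norm _).trans (qf_bound _ _)

lemma gelf {E : Type*} [NormedAddCommGroup E] [NormedSpace ℂ E] [FiniteDimensional ℂ E] [Nontrivial E]
    (f : Module.End ℂ E) (s : ℝ) (hs0 : 0 < s) (hs : ∀ μ, f.HasEigenvalue μ → ‖μ‖ < s) (x : E) :
    Tendsto (fun n : ℕ => ((s⁻¹ ^ n : ℝ) : ℂ) • (f ^ n) x) atTop (𝓝 0) := by
  have : CompleteSpace E := FiniteDimensional.complete ℂ E
  let a := Module.End.toContinuousLinearMap E f
  have ha : spectralRadius ℂ a < (NNReal.mk s hs0.le : ℝ≥0∞) := by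
    apply spectrum.spectralRadius_lt_of_forall_lt
    intro z hz
    rw [AlgEquiv.spectrum_eq (Module.End.toContinuousLinearMap (𝕜 := ℂ) E) f] at hz
    exact hs z (Module.End.hasEigenvalue_iff_mem_spectrum.2 hz)
  obtain ⟨r, hr1, hr2⟩ := ENNReal.lt_iff_exists_nnreal_btwn.1 ha
  have hr2 : (r : ℝ) < s := by exact_mod_cast hr2
  have h1 := (spectrum.pow_nnnorm_pow_one_div_tendsto_nhds_spectralRadius a).eventually_lt_const hr1
  have hpow : ∀ n, (f ^ n) x = (a ^ n) x := by
    intro n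
    have : a ^ n = Module.End.toContinuousLinearMap E (f ^ n) := by simp [a]
    rw [this]; rfl
  have h0 : Tendsto (fun n : ℕ => (r / s) ^ n * ‖x‖) atTop (𝓝 0) := by
    have := (tendsto_pow_atTop_nhds_zero_of_lt_one (r := (r / s : ℝ)) (by positivity) ((div_lt_one hs0).2 hr2)).mul_const ‖x‖
    simpa using this
  refine squeeze_zero_norm' ?_ h0
  filter_upwards [h1, eventually_gt_atTop 0] with n hn hn0
  have h2 : ‖a ^ n‖ ≤ (r : ℝ) ^ n := by
    have h3 : ((‖a ^ n‖₊ : ℝ≥0∞) ^ (1 / n : ℝ)) ^ (n : ℝ) ≤ (r : ℝ≥0∞) ^ (n : ℝ) :=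
      ENNReal.rpow_le_rpow hn.le (by positivity)
    rw [← ENNReal.rpow_mul, one_div_mul_cancel (by positivity), ENNReal.rpow_one, ENNReal.rpow_natCast] at h3
    exact_mod_cast h3
  rw [hpow, norm_smul, Complex.norm_real, Real.norm_of_nonneg (by positivity), div_pow]
  calc _ ≤ s⁻¹ ^ n * (r ^ n * ‖x‖) := by
        gcongr
        exact (a ^ n).le_of_opNorm_le h2 x
    _ = _ := by rw [inv_pow]; field_simp

section
attribute [local instance] Matrix.normedAddCommGroup Matrix.normedSpace
lemma gelf_mat {N : ℕ} (hN : 0 < N) (f : Module.End ℂ (Mat N)) (s : ℝ) (hs0 : 0 < s)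
    (hs : ∀ μ, f.HasEigenvalue μ → ‖μ‖ < s) (x : Mat N) :
    ∃ n : ℕ, ∑ i, ∑ j, ‖(((s⁻¹ ^ (n + 1) : ℝ) : ℂ) • (f ^ (n + 1)) x) i j‖ ≤ 1 := by
  have : Nonempty (Fin N) := ⟨⟨0, hN⟩⟩
  have h := gelf f s hs0 hs x
  have hc : Continuous fun X : Mat N => ∑ i, ∑ j, ‖X i j‖ := by fun_prop
  have h2 := (hc.tendsto 0).comp ((tendsto_add_atTop_iff_nat 1).2 h)
  simp only [Matrix.zero_apply, norm_zero, Finset.sum_const_zero] at h2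
  obtain ⟨n, hn⟩ := (h2.eventually_lt_const one_pos).exists
  exact ⟨n, hn.le⟩
end

lemma exists_qf_ne {N : ℕ} {X : Mat N} (hX : X ≠ 0) : ∃ v, star v ⬝ᵥ X *ᵥ v ≠ 0 := by
  by_contra! h
  apply hX
  have h1 : Matrix.toEuclideanLin X = 0 := by
    rw [← inner_map_self_eq_zero]
    intro x
    have := h x.ofLp
    rw [← inner_conj_symm]
    simp [EuclideanSpace.inner_eq_star_dotProduct, dotProduct_comm _ (star _), this]
  simpa using h1

/-- Upper bound for eigenvalues. -/
lemma eig_le {N : ℕ} (S : Module.End ℂ (Mat N))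
    (hpsd : ∀ Q : Mat N, Q.PosSemidef → (S Q).PosSemidef) {W : Mat N} (hW : W.PosDef) {t : ℝ}
    (ht : 0 < t) (htW : (W - (t : ℂ) • S W).PosSemidef) {μ : ℂ} (hμ : S.HasEigenvalue μ) :
    t * ‖μ‖ ≤ 1 := by
  obtain ⟨X, hX⟩ := hμ.exists_hasEigenvector
  have hpow : ∀ (n : ℕ) (Q : Mat N), Q.PosSemidef → ((S ^ n) Q).PosSemidef := by
    intro n
    induction n with
    | zero => intro Q hQ; simpa using hQ
    | succ n ih => intro Q hQ; rw [pow_succ]; exact ih _ (hpsd _ hQ)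
  have hn : ∀ n : ℕ, ∀ v, t ^ n * qf ((S ^ n) W) v ≤ qf W v := by
    intro n v
    induction n with
    | zero => simp
    | succ n ih =>
      have := qf_nonneg (hpow n _ htW) v
      rw [map_sub, map_smul, qf_sub, qf_smul] at this
      have h2 : (S ^ (n + 1)) W = (S ^ n) (S W) := by rw [pow_succ]; rfl
      rw [h2, pow_succ]
      have : t ^ n * (t * qf ((S ^ n) (S W)) v) ≤ t ^ n * qf ((S ^ n) W) v := by
        gcongr; linarith
      linarith
  obtain ⟨C, hC0, hC⟩ := one_le_W hW
  -- Hermitian bound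
  have hherm : ∀ A : Mat N, A.IsHermitian → ∃ D, 0 ≤ D ∧ ∀ (n : ℕ) v,
      t ^ n * ‖star v ⬝ᵥ (S ^ n) A *ᵥ v‖ ≤ D * qf W v := by
    intro A hA
    set K := ∑ i, ∑ j, ‖A i j‖
    have hK : 0 ≤ K := by positivity
    have hb : ∀ v, |qf A v| ≤ (K * C) * qf W v := fun v => by
      have := (Complex.abs_re_le_norm _).trans (qf_bound A v)
      have h2 := mul_le_mul_of_nonneg_left (hC v) hK
      simp only [qf] at *; linarith
    have hWh : (((K * C : ℝ) : ℂ) • W).IsHermitian := by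
      have := hW.isHermitian
      rw [Matrix.IsHermitian] at *
      rw [conjTranspose_smul, this]; simp
    have hp : (((K * C : ℝ) : ℂ) • W + A).PosSemidef := psd_of_qf (hWh.add hA) fun v _ => by
      rw [qf_add, qf_smul]; linarith [neg_abs_le (qf A v), hb v]
    have hm : (((K * C : ℝ) : ℂ) • W - A).PosSemidef := psd_of_qf (hWh.sub hA) fun v _ => by
      rw [qf_sub, qf_smul]; linarith [le_abs_self (qf A v), hb v]
    refine ⟨K * C, by positivity, fun n v => ?_⟩
    have h1 := hpow n _ hp
    have h2 := hpow n _ hm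
    have h3 : ((S ^ n) A).IsHermitian := by
      have e : (S ^ n) A = (S ^ n) (((K * C : ℝ) : ℂ) • W + A) - (((K * C : ℝ) : ℂ) • (S ^ n) W) := by
        rw [map_add, map_smul]; abel
      rw [e]
      refine h1.isHermitian.sub ?_
      have := (hpow n _ hW.posSemidef).isHermitian
      rw [Matrix.IsHermitian] at *
      rw [conjTranspose_smul, this]; simp
    have h4 : ‖star v ⬝ᵥ (S ^ n) A *ᵥ v‖ = |qf ((S ^ n) A) v| := by
      have e : star v ⬝ᵥ (S ^ n) A *ᵥ v = ((qf ((S ^ n) A) v : ℝ) : ℂ) := by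
        apply Complex.ext
        · simp [qf]
        · simpa using herm_im h3 v
      rw [e, Complex.norm_real, Real.norm_eq_abs]
    rw [h4]
    have q1 := qf_nonneg h1 v
    have q2 := qf_nonneg h2 v
    rw [map_add, map_smul, qf_add, qf_smul] at q1
    rw [map_sub, map_smul, qf_sub, qf_smul] at q2
    have : |qf ((S ^ n) A) v| ≤ (K * C) * qf ((S ^ n) W) v := abs_le.2 ⟨by linarith, by linarith⟩
    calc _ ≤ t ^ n * ((K * C) * qf ((S ^ n) W) v) := by gcongr
      _ = (K * C) * (t ^ n * qf ((S ^ n) W) v) := by ring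
      _ ≤ _ := mul_le_mul_of_nonneg_left (hn n v) (by positivity)
  obtain ⟨v, hv⟩ := exists_qf_ne hX.2
  obtain ⟨D1, hD1, hA⟩ := hherm (X + Xᴴ) (by simp [Matrix.IsHermitian, add_comm])
  obtain ⟨D2, hD2, hB⟩ := hherm (Complex.I • (X - Xᴴ)) (by
    simp [Matrix.IsHermitian, conjTranspose_smul, ← smul_neg])
  have key : ∀ n : ℕ, (t * ‖μ‖) ^ n * (2 * ‖star v ⬝ᵥ X *ᵥ v‖) ≤ (D1 + D2) * qf W v := by
    intro n
    have e1 : (S ^ n) X = μ ^ n • X := hX.pow_apply n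
    have e2 : (2 : ℂ) • (S ^ n) X = (S ^ n) (X + Xᴴ) + (-Complex.I) • (S ^ n) (Complex.I • (X - Xᴴ)) := by
      rw [map_smul, smul_smul, map_sub, map_add, two_smul]; simp
    have e3 : (2 : ℂ) * (μ ^ n * (star v ⬝ᵥ X *ᵥ v)) = star v ⬝ᵥ (S ^ n) (X + Xᴴ) *ᵥ v
        + (-Complex.I) * (star v ⬝ᵥ (S ^ n) (Complex.I • (X - Xᴴ)) *ᵥ v) := by
      have := congrArg (fun Y => star v ⬝ᵥ Y *ᵥ v) e2
      simp only [e1, Matrix.add_mulVec, dotProduct_add, Matrix.smul_mulVec, dotProduct_smul, smul_eq_mul] at this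
      exact this
    have e4 := norm_add_le (star v ⬝ᵥ (S ^ n) (X + Xᴴ) *ᵥ v) ((-Complex.I) * (star v ⬝ᵥ (S ^ n) (Complex.I • (X - Xᴴ)) *ᵥ v))
    rw [← e3] at e4
    simp only [norm_mul, norm_pow, norm_neg, Complex.norm_I, one_mul, Complex.norm_ofNat] at e4
    have := mul_le_mul_of_nonneg_left e4 (pow_nonneg ht.le n)
    rw [mul_pow]
    linarith [hA n v, hB n v]
  by_contra! hlt
  have hpos : 0 < 2 * ‖star v ⬝ᵥ X *ᵥ v‖ := by positivity
  obtain ⟨n, hn⟩ := pow_unbounded_of_one_lt ((D1 + D2) * qf W v / (2 * ‖star v ⬝ᵥ X *ᵥ v‖)) hlt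
  rw [div_lt_iff₀ hpos] at hn
  linarith [key n]

lemma exists_W {N : ℕ} (hN : 0 < N) (S : Module.End ℂ (Mat N))
    (hpsd : ∀ Q : Mat N, Q.PosSemidef → (S Q).PosSemidef) {s : ℝ} (hs0 : 0 < s)
    (hs : ∀ μ, S.HasEigenvalue μ → ‖μ‖ < s) :
    ∃ W : Mat N, W.PosDef ∧ ∀ v, qf (S W) v ≤ s * qf W v := by
  have hpow : ∀ (n : ℕ), ((S ^ n) 1).PosSemidef := by
    intro n
    induction n with
    | zero => simpa using Matrix.PosSemidef.one
    | succ n ih => rw [pow_succ']; exact hpsd _ ih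
  obtain ⟨n, hn⟩ := gelf_mat hN S s hs0 hs 1
  let W : ℕ → Mat N := fun n => ∑ k ∈ Finset.range n, ((s⁻¹ ^ k : ℝ) : ℂ) • (S ^ k) 1
  have hWn : ∀ m, (W m).PosSemidef := fun m => by
    refine Matrix.posSemidef_sum _ fun k _ => ?_
    exact (hpow k).smul (by exact_mod_cast (by positivity : (0 : ℝ) ≤ s⁻¹ ^ k))
  have hSW : ∀ m v, qf (S (W m)) v = s * (qf (W m) v - qf 1 v + qf (((s⁻¹ ^ m : ℝ) : ℂ) • (S ^ m) 1) v) := by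
    intro m v
    induction m with
    | zero => simp [W, qf]
    | succ m ih =>
      have e : W (m + 1) = W m + ((s⁻¹ ^ m : ℝ) : ℂ) • (S ^ m) 1 := Finset.sum_range_succ _ _
      have e2 : (S ^ (m + 1)) 1 = S ((S ^ m) 1) := by rw [pow_succ']; rfl
      rw [e, map_add, map_smul, qf_add, qf_add, ih, e2]
      simp only [qf_smul, pow_succ]
      field_simp
      ring
  have hWpd : (W (n + 1)).PosDef := by
    have e : W (n + 1) = (∑ k ∈ Finset.range n, ((s⁻¹ ^ (k + 1) : ℝ) : ℂ) • (S ^ (k + 1)) 1) + 1 := by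
      simp only [W]
      rw [Finset.sum_range_succ']
      simp
    rw [e]
    refine Matrix.PosDef.posSemidef_add (Matrix.posSemidef_sum _ fun k _ => ?_) Matrix.PosDef.one
    exact (hpow (k + 1)).smul (by exact_mod_cast (by positivity : (0 : ℝ) ≤ s⁻¹ ^ (k + 1)))
  refine ⟨W (n + 1), hWpd, fun v => ?_⟩
  rw [hSW]
  have h1 := (Complex.re_le_norm _).trans (qf_bound (((s⁻¹ ^ (n + 1) : ℝ) : ℂ) • (S ^ (n + 1)) 1) v)
  have h2 := mul_le_mul_of_nonneg_right hn (qf_nonneg Matrix.PosSemidef.one v)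
  refine mul_le_mul_of_nonneg_left ?_ hs0.le
  simp only [qf] at *
  linarith

/-- `P` equals the reciprocal of the spectral radius `ρ` of `𝒮`,
with the convention `1/0 = ∞`. -/
theorem stmt1 {N : ℕ} (hN : 0 < N) (L : Mat N) (hL : IsUnit L)
    (V : Mat N →ₗ[ℂ] Mat N)
    (hVherm : ∀ Q : Mat N, Q.IsHermitian → (V Q).IsHermitian)
    (hVpsd : ∀ Q : Mat N, Q.PosSemidef → (V Q).PosSemidef) :
    Pval L V = (ENNReal.ofReal (specRad (Smap L V)))⁻¹ := by
  have hne : Nonempty (Fin N) := ⟨⟨0, hN⟩⟩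
  have hLd := (Matrix.isUnit_iff_isUnit_det L).1 hL
  have hLi : L⁻¹ * L = 1 := Matrix.nonsing_inv_mul _ hLd
  have hLi' : L * L⁻¹ = 1 := Matrix.mul_nonsing_inv _ hLd
  have hLH : (L⁻¹)ᴴ * Lᴴ = 1 := by rw [← conjTranspose_mul, hLi', conjTranspose_one]
  have hLH' : Lᴴ * (L⁻¹)ᴴ = 1 := by rw [← conjTranspose_mul, hLi, conjTranspose_one]
  have hSpsd : ∀ Q : Mat N, Q.PosSemidef → (Smap L V Q).PosSemidef := fun Q hQ =>
    hVpsd _ (hQ.conjTranspose_mul_mul_same _)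
  have hfin : {r : ℝ | ∃ μ : ℂ, (Smap L V).HasEigenvalue μ ∧ r = ‖μ‖}.Finite := by
    have h := (Module.End.finite_hasEigenvalue (Smap L V)).image (fun z : ℂ => ‖z‖)
    refine h.subset ?_
    rintro r ⟨μ, hμ, rfl⟩
    exact ⟨μ, hμ, rfl⟩
  have hle : ∀ μ, (Smap L V).HasEigenvalue μ → ‖μ‖ ≤ specRad (Smap L V) := fun μ hμ =>
    le_csSup hfin.bddAbove ⟨μ, hμ, rfl⟩
  obtain ⟨μ₀, hμ₀⟩ := Module.End.exists_eigenvalue (Smap L V)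
  apply le_antisymm
  · refine iSup_le fun ⟨Q, hQ⟩ => ?_
    refine le_of_forall_lt_imp_le_of_dense fun c hc => ?_
    rcases eq_or_ne c 0 with rfl | hc0
    · exact zero_le
    have hct : c ≠ ∞ := hc.ne_top
    have ht : 0 < c.toReal := ENNReal.toReal_pos hc0 hct
    have hW : (Lᴴ * Q * L).PosDef := hQ.conjTranspose_mul_mul_same
      (Matrix.mulVec_injective_of_isUnit hL)
    have hSQ : Smap L V (Lᴴ * Q * L) = V Q := by
      have e : (L⁻¹)ᴴ * (Lᴴ * Q * L) * L⁻¹ = Q := by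
        calc _ = ((L⁻¹)ᴴ * Lᴴ) * Q * (L * L⁻¹) := by simp only [Matrix.mul_assoc]
          _ = Q := by rw [hLi', hLH]; simp
      change V ((L⁻¹)ᴴ * (Lᴴ * Q * L) * L⁻¹) = V Q
      rw [e]
    have hVQ := hVpsd Q hQ.posSemidef
    have htW : ((Lᴴ * Q * L) - (c.toReal : ℂ) • Smap L V (Lᴴ * Q * L)).PosSemidef := by
      rw [hSQ]
      refine psd_of_qf (hW.isHermitian.sub ?_) fun v hv => ?_
      · have := hVQ.isHermitian
        rw [Matrix.IsHermitian] at *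
        rw [conjTranspose_smul, this]; simp
      · rw [qf_sub, qf_smul, sub_nonneg]
        have h1 := hc.le.trans (iInf_le _ ⟨v, hv⟩)
        have h2 := ENNReal.mul_le_of_le_div h1
        rw [← ENNReal.ofReal_toReal hct, ← ENNReal.ofReal_mul ht.le] at h2
        exact (ENNReal.ofReal_le_ofReal_iff (qf_pos hW hv).le).1 h2
    rw [ENNReal.le_inv_iff_le_inv, ← ENNReal.ofReal_toReal hct, ← ENNReal.ofReal_inv_of_pos ht]
    refine ENNReal.ofReal_le_ofReal (csSup_le ⟨_, μ₀, hμ₀, rfl⟩ ?_)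
    rintro r ⟨μ, hμ, rfl⟩
    have := eig_le _ hSpsd hW ht htW hμ
    rwa [← one_div, le_div_iff₀ ht, mul_comm]
  · rw [ENNReal.inv_le_iff_inv_le]
    refine le_of_forall_gt_imp_ge_of_dense fun c hc => ?_
    rcases eq_or_ne c ∞ with rfl | hct
    · exact le_top
    have hs : specRad (Smap L V) < c.toReal := (ENNReal.ofReal_lt_iff_lt_toReal
      ((norm_nonneg _).trans (hle _ hμ₀)) hct).1 hc
    have hs0 : 0 < c.toReal := ((norm_nonneg _).trans (hle _ hμ₀)).trans_lt hs
    obtain ⟨W, hW, hSW⟩ := exists_W hN _ hSpsd hs0 fun μ hμ => (hle μ hμ).trans_lt hs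
    rw [ENNReal.inv_le_iff_inv_le]
    have hQ : ((L⁻¹)ᴴ * W * L⁻¹).PosDef := hW.conjTranspose_mul_mul_same
      (Matrix.mulVec_injective_of_isUnit (Matrix.isUnit_nonsing_inv_iff.2 hL))
    refine le_iSup_of_le ⟨_, hQ⟩ (le_iInf fun ⟨v, hv⟩ => ?_)
    have e : Lᴴ * ((L⁻¹)ᴴ * W * L⁻¹) * L = W := by
      calc _ = (Lᴴ * (L⁻¹)ᴴ) * W * (L⁻¹ * L) := by simp only [Matrix.mul_assoc]
        _ = W := by rw [hLi, hLH']; simp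
    have hq := qf_pos hW hv
    simp only [e]
    rw [ENNReal.le_div_iff_mul_le (Or.inr (by simpa using hq)) (Or.inr ENNReal.ofReal_ne_top),
      mul_comm, ← div_eq_mul_inv]
    refine ENNReal.div_le_of_le_mul ?_
    rw [← ENNReal.ofReal_toReal hct, ← ENNReal.ofReal_mul hq.le, mul_comm]
    exact ENNReal.ofReal_le_ofReal (hSW v)

end
end

section
/- The reciprocal of P admits the following two characterizations (as elements of [0,∞], with 1/∞ = 0): 1/P = inf_{Q ≻ 0} sup_{w ≠ 0} (w* 𝒮[Q] w)/(w* Q w) = inf{ μ ≥ 0 : there exists Q ≻ 0 with 𝒮[Q] ⪯ μ·Q }. -/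
open Matrix ComplexOrder ENNReal

noncomputable section

theorem aux_pd {N : ℕ} {Q : Mat N} (hQ : Q.PosDef) {v : Fin N → ℂ} (hv : v ≠ 0) : 0 < qf Q v := by
  have h := hQ.dotProduct_mulVec_pos hv
  exact (Complex.lt_def.1 h).1

theorem aux_conj {N : ℕ} {Q L : Mat N} (hQ : Q.PosDef) (hL : IsUnit L) : (Lᴴ * Q * L).PosDef :=
  hQ.conjTranspose_mul_mul_same (Matrix.mulVec_injective_of_isUnit hL)

theorem aux_psd {N : ℕ} {A : Mat N} (hA : A.IsHermitian) :
    A.PosSemidef ↔ ∀ v : Fin N → ℂ, v ≠ 0 → 0 ≤ qf A v := by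
  constructor
  · intro h v _
    exact (Complex.le_def.1 (h.dotProduct_mulVec_nonneg v)).1
  · intro h
    refine Matrix.PosSemidef.of_dotProduct_mulVec_nonneg hA fun v => ?_
    refine Complex.le_def.2 ⟨?_, ?_⟩
    · by_cases hv : v = 0
      · simp [hv]
      · exact h v hv
    · exact (hA.im_star_dotProduct_mulVec_self v).symm

theorem aux_qf {N : ℕ} (A B : Mat N) (μ : ℝ) (v : Fin N → ℂ) :
    qf ((μ : ℂ) • A - B) v = μ * qf A v - qf B v := by
  simp [qf, Matrix.sub_mulVec, Matrix.smul_mulVec]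

theorem aux_S1 {N : ℕ} (L : Mat N) (hL : IsUnit L) (V : Mat N →ₗ[ℂ] Mat N) (Q : Mat N) :
    Smap L V (Lᴴ * Q * L) = V Q := by
  have h1 : L * L⁻¹ = 1 := Matrix.mul_nonsing_inv L ((Matrix.isUnit_iff_isUnit_det L).1 hL)
  have h2 : L⁻¹ᴴ * Lᴴ = 1 := by rw [← Matrix.conjTranspose_mul, h1, Matrix.conjTranspose_one]
  have : L⁻¹ᴴ * (Lᴴ * Q * L) * L⁻¹ = (L⁻¹ᴴ * Lᴴ) * Q * (L * L⁻¹) := by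
    simp only [Matrix.mul_assoc]
  simp only [Smap, conjBy, LinearMap.comp_apply, LinearMap.coe_mk, AddHom.coe_mk]
  rw [this, h1, h2, Matrix.one_mul, Matrix.mul_one]

theorem aux_S2 {N : ℕ} (L : Mat N) (hL : IsUnit L) (Q : Mat N) :
    Lᴴ * (L⁻¹ᴴ * Q * L⁻¹) * L = Q := by
  have h1 : L⁻¹ * L = 1 := Matrix.nonsing_inv_mul L ((Matrix.isUnit_iff_isUnit_det L).1 hL)
  have h2 : Lᴴ * L⁻¹ᴴ = 1 := by rw [← Matrix.conjTranspose_mul, h1, Matrix.conjTranspose_one]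
  have : Lᴴ * (L⁻¹ᴴ * Q * L⁻¹) * L = (Lᴴ * L⁻¹ᴴ) * Q * (L⁻¹ * L) := by
    simp only [Matrix.mul_assoc]
  rw [this, h1, h2, Matrix.one_mul, Matrix.mul_one]

theorem aux_first {N : ℕ} (L : Mat N) (hL : IsUnit L) (V : Mat N →ₗ[ℂ] Mat N) :
    (Pval L V)⁻¹ =
      (⨅ Q : {Q : Mat N // Q.PosDef}, ⨆ w : {w : Fin N → ℂ // w ≠ 0},
        ENNReal.ofReal (qf ((Smap L V) Q.1) w.1) / ENNReal.ofReal (qf Q.1 w.1)) := by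
  have hL' : IsUnit L⁻¹ := (Matrix.isUnit_nonsing_inv_iff).2 hL
  let f : {Q : Mat N // Q.PosDef} → {Q : Mat N // Q.PosDef} :=
    fun Q => ⟨Lᴴ * Q.1 * L, aux_conj Q.2 hL⟩
  have hf : Function.Surjective f := fun Q =>
    ⟨⟨L⁻¹ᴴ * Q.1 * L⁻¹, aux_conj Q.2 hL'⟩, Subtype.ext (aux_S2 L hL Q.1)⟩
  rw [← hf.iInf_comp, Pval, ENNReal.inv_iSup]
  refine iInf_congr fun Q => ?_
  rw [ENNReal.inv_iInf]
  refine iSup_congr fun v => ?_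
  have hpos : ENNReal.ofReal (qf (Lᴴ * Q.1 * L) v.1) ≠ 0 :=
    (ENNReal.ofReal_pos.2 (aux_pd (aux_conj Q.2 hL) v.2)).ne'
  rw [ENNReal.inv_div (Or.inl ENNReal.ofReal_ne_top) (Or.inr hpos)]
  simp only [f, aux_S1 L hL V]

theorem aux_second {N : ℕ} (L : Mat N) (V : Mat N →ₗ[ℂ] Mat N)
    (hVherm : ∀ Q : Mat N, Q.IsHermitian → (V Q).IsHermitian) (Q : Mat N) (hQ : Q.PosDef)
    (μ : ℝ) (hμ : 0 ≤ μ) :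
    ((μ : ℂ) • Q - (Smap L V) Q).PosSemidef ↔ (⨆ w : {w : Fin N → ℂ // w ≠ 0},
        ENNReal.ofReal (qf ((Smap L V) Q) w.1) / ENNReal.ofReal (qf Q w.1)) ≤ ENNReal.ofReal μ := by
  have hS : (Smap L V Q).IsHermitian :=
    hVherm _ (Matrix.isHermitian_conjTranspose_mul_mul _ hQ.1)
  have hA : ((μ : ℂ) • Q - (Smap L V) Q).IsHermitian := by
    refine Matrix.IsHermitian.sub ?_ hS
    rw [Matrix.IsHermitian, Matrix.conjTranspose_smul, hQ.1.eq]
    simp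
  rw [aux_psd hA, iSup_le_iff, Subtype.forall]
  refine forall₂_congr fun v hv => ?_
  have hp := aux_pd hQ hv
  rw [aux_qf, ENNReal.div_le_iff (ENNReal.ofReal_pos.2 hp).ne' ENNReal.ofReal_ne_top,
    ← ENNReal.ofReal_mul hμ, ENNReal.ofReal_le_ofReal_iff (by positivity), sub_nonneg]

/-- two characterizations of `1/P`:
`1/P = inf_{Q ≻ 0} sup_{w ≠ 0} (w* 𝒮[Q] w)/(w* Q w)
     = inf{ μ ≥ 0 : ∃ Q ≻ 0 with 𝒮[Q] ⪯ μ·Q }`. -/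
theorem stmt2 {N : ℕ} (hN : 0 < N) (L : Mat N) (hL : IsUnit L)
    (V : Mat N →ₗ[ℂ] Mat N)
    (hVherm : ∀ Q : Mat N, Q.IsHermitian → (V Q).IsHermitian)
    (hVpsd : ∀ Q : Mat N, Q.PosSemidef → (V Q).PosSemidef) :
    (Pval L V)⁻¹ =
      (⨅ Q : {Q : Mat N // Q.PosDef}, ⨆ w : {w : Fin N → ℂ // w ≠ 0},
        ENNReal.ofReal (qf ((Smap L V) Q.1) w.1) / ENNReal.ofReal (qf Q.1 w.1)) ∧
    (Pval L V)⁻¹ =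
      sInf {x : ℝ≥0∞ | ∃ μ : ℝ, 0 ≤ μ ∧ x = ENNReal.ofReal μ ∧
        ∃ Q : Mat N, Q.PosDef ∧ ((μ : ℂ) • Q - (Smap L V) Q).PosSemidef} := by
  refine ⟨aux_first L hL V, ?_⟩
  rw [aux_first L hL V]
  refine le_antisymm ?_ ?_
  · refine le_sInf ?_
    rintro x ⟨μ, hμ, rfl, Q, hQ, h⟩
    exact (iInf_le _ (⟨Q, hQ⟩ : {Q : Mat N // Q.PosDef})).trans
      ((aux_second L V hVherm Q hQ μ hμ).1 h)
  · refine le_iInf fun Q => ?_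
    generalize hs : (⨆ w : {w : Fin N → ℂ // w ≠ 0},
        ENNReal.ofReal (qf ((Smap L V) Q.1) w.1) / ENNReal.ofReal (qf Q.1 w.1)) = s
    by_cases htop : s = ⊤
    · rw [htop]; exact le_top
    · refine sInf_le ⟨s.toReal, ENNReal.toReal_nonneg, (ENNReal.ofReal_toReal htop).symm,
        Q.1, Q.2, ?_⟩
      rw [aux_second L V hVherm Q.1 Q.2 _ ENNReal.toReal_nonneg, hs, ENNReal.ofReal_toReal htop]

end
end

section
/- The windowing function κ_w has total mass at the origin κ_w(0) = 1, is supported in [−1,1], and its Fourier transform is everywhere nonnegative; explicitly, for every ω ∈ ℝ with ω ≠ π and ω ≠ −π, ∫_ℝ κ_w(x) e^{−iωx} dx = 4π²(1 + cos ω)/(π² − ω²)² ≥ 0. -/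
open Real

noncomputable section

/-- The windowing function `κ_w`. -/
def κw (x : ℝ) : ℝ :=
  if |x| ≤ 1 then (1 / Real.pi) * Real.sin (Real.pi * |x|) + (1 - |x|) * Real.cos (Real.pi * x)
  else 0

theorem aux_real (ω : ℝ) (h1 : ω ≠ Real.pi) (h2 : ω ≠ -Real.pi) :
    (∫ x in (0:ℝ)..1, ((1 / Real.pi) * Real.sin (Real.pi * x) + (1 - x) * Real.cos (Real.pi * x))
      * (2 * Real.cos (ω * x)))
      = 4 * Real.pi ^ 2 * (1 + Real.cos ω) / (Real.pi ^ 2 - ω ^ 2) ^ 2 := by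
  have hD : Real.pi ^ 2 - ω ^ 2 ≠ 0 := by
    have e : Real.pi ^ 2 - ω ^ 2 = -((ω - Real.pi) * (ω - -Real.pi)) := by ring
    rw [e]
    exact neg_ne_zero.mpr (mul_ne_zero (sub_ne_zero.mpr h1) (sub_ne_zero.mpr h2))
  have hpi := Real.pi_ne_zero
  have hF : ∀ x : ℝ, HasDerivAt (fun x : ℝ => 2 / (Real.pi ^ 2 - ω ^ 2) *
      (-(2 * Real.pi / (Real.pi ^ 2 - ω ^ 2)) * (Real.pi * (Real.cos (Real.pi * x) * Real.cos (ω * x))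
        + ω * (Real.sin (Real.pi * x) * Real.sin (ω * x)))
        + Real.pi * ((1 - x) * Real.sin (Real.pi * x) * Real.cos (ω * x))
        - ω * (((1 / Real.pi) * Real.sin (Real.pi * x) + (1 - x) * Real.cos (Real.pi * x))
          * Real.sin (ω * x))))
      (((1 / Real.pi) * Real.sin (Real.pi * x) + (1 - x) * Real.cos (Real.pi * x))
      * (2 * Real.cos (ω * x))) x := by
    intro x
    have l : ∀ a : ℝ, HasDerivAt (fun x : ℝ => a * x) a x := fun a => by
      simpa using (hasDerivAt_id x).const_mul a
    have hs : ∀ a : ℝ, HasDerivAt (fun x : ℝ => Real.sin (a * x)) (Real.cos (a * x) * a) x :=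
      fun a => (l a).sin
    have hc : ∀ a : ℝ, HasDerivAt (fun x : ℝ => Real.cos (a * x)) (-Real.sin (a * x) * a) x :=
      fun a => (l a).cos
    have h1x : HasDerivAt (fun x : ℝ => 1 - x) (-1) x := by
      simpa using (hasDerivAt_id x).const_sub 1
    have A := ((((((hc Real.pi).fun_mul (hc ω)).const_mul Real.pi).fun_add
      (((hs Real.pi).fun_mul (hs ω)).const_mul ω)).const_mul
      (-(2 * Real.pi / (Real.pi ^ 2 - ω ^ 2)))).fun_add
      (((h1x.fun_mul (hs Real.pi)).fun_mul (hc ω)).const_mul Real.pi)).fun_sub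
      (((((hs Real.pi).const_mul (1 / Real.pi)).fun_add (h1x.fun_mul (hc Real.pi))).fun_mul
        (hs ω)).const_mul ω)
    refine (A.const_mul (2 / (Real.pi ^ 2 - ω ^ 2))).congr_deriv ?_
    field_simp
    ring
  rw [intervalIntegral.integral_eq_sub_of_hasDerivAt (fun x _ => hF x)
    (Continuous.intervalIntegrable (by fun_prop) _ _)]
  simp
  field_simp
  ring

/-- `κ_w(0) = 1`, `κ_w` is supported in `[−1,1]`, and its Fourier transform is
everywhere nonnegative: for `ω ≠ ±π`,
`∫ κ_w(x) e^{−iωx} dx = 4π²(1 + cos ω)/(π² − ω²)² ≥ 0`. -/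
theorem stmt6 :
    κw 0 = 1 ∧
    (∀ x : ℝ, 1 < |x| → κw x = 0) ∧
    ∀ ω : ℝ, ω ≠ Real.pi → ω ≠ -Real.pi →
      (∫ x : ℝ, (κw x : ℂ) * Complex.exp (-(Complex.I * (ω : ℂ) * (x : ℂ))))
          = ((4 * Real.pi ^ 2 * (1 + Real.cos ω) / (Real.pi ^ 2 - ω ^ 2) ^ 2 : ℝ) : ℂ) ∧
        0 ≤ 4 * Real.pi ^ 2 * (1 + Real.cos ω) / (Real.pi ^ 2 - ω ^ 2) ^ 2 := by
  refine ⟨by simp [κw], fun x hx => by simp [κw, not_le.mpr hx], fun ω h1 h2 => ⟨?_, ?_⟩⟩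
  · set g : ℝ → ℂ := fun x => (κw x : ℂ) * Complex.exp (-(Complex.I * (ω : ℂ) * (x : ℂ))) with hg
    set k : ℝ → ℝ := fun x => (1 / Real.pi) * Real.sin (Real.pi * |x|)
      + (1 - |x|) * Real.cos (Real.pi * x) with hk
    set h : ℝ → ℂ := fun x => (k x : ℂ) * Complex.exp (-(Complex.I * (ω : ℂ) * (x : ℂ))) with hh
    have hcont : Continuous h := by
      have : Continuous k := by fun_prop
      fun_prop
    have hcont2 : Continuous (fun x => h (-x)) := hcont.comp continuous_neg
    have hgh : g = (Set.Icc (-1 : ℝ) 1).indicator h := by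
      funext x
      by_cases hx : |x| ≤ 1
      · rw [Set.indicator_of_mem (by exact abs_le.mp hx)]
        simp only [hg, hh, hk, κw, if_pos hx]
      · rw [Set.indicator_of_notMem (by exact fun H => hx (abs_le.mpr H))]
        simp only [hg, κw, if_neg hx]
        simp
    have hneg : (∫ x in (-1:ℝ)..0, h x) = ∫ x in (0:ℝ)..1, h (-x) := by
      rw [intervalIntegral.integral_comp_neg]; simp
    rw [hgh, MeasureTheory.integral_indicator measurableSet_Icc,
      MeasureTheory.integral_Icc_eq_integral_Ioc,
      ← intervalIntegral.integral_of_le (by norm_num),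
      ← intervalIntegral.integral_add_adjacent_intervals (b := 0)
        (hcont.intervalIntegrable _ _) (hcont.intervalIntegrable _ _), hneg,
      ← intervalIntegral.integral_add
        (hcont2.intervalIntegrable _ _) (hcont.intervalIntegrable _ _),
      ← aux_real ω h1 h2, ← intervalIntegral.integral_ofReal]
    refine intervalIntegral.integral_congr fun x hx => ?_
    rw [Set.uIcc_of_le (by norm_num)] at hx
    have e1 : k (-x) = k x := by simp [hk]
    have e2 : k x = (1 / Real.pi) * Real.sin (Real.pi * x) + (1 - x) * Real.cos (Real.pi * x) := by
      simp only [hk, abs_of_nonneg hx.1]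
    have e3 : Complex.exp (-(Complex.I * (ω : ℂ) * ((-x : ℝ) : ℂ)))
        + Complex.exp (-(Complex.I * (ω : ℂ) * (x : ℂ))) = ((2 * Real.cos (ω * x) : ℝ) : ℂ) := by
      push_cast
      rw [Complex.two_cos]
      congr 2 <;> ring
    simp only [hh, e1]
    rw [← mul_add, e3, ← Complex.ofReal_mul, e2]
  · have := Real.neg_one_le_cos ω
    have : 0 ≤ 1 + Real.cos ω := by linarith
    positivity

end
end

section
/- Let U ⊆ ℂ be open, let A, B : U → M_N be analytic, and let D̄ ⊆ U be a closed disk with boundary circle ∂D and open interior D. Suppose that for every λ ∈ ∂D the matrix A(λ) is invertible and there exists a Hermitian positive definite Q ∈ M_N with ‖A(λ)⁻¹(B(λ) − A(λ))‖_Q < 1. Then det∘A and det∘B have no zeros on ∂D, each has only finitely many zeros in D, and the number of zeros of det∘A in D counted with multiplicity (i.e. the sum over z ∈ D of the order of vanishing of det∘A at z) equals the corresponding count for det∘B. -/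
open Matrix ComplexOrder ENNReal Metric

noncomputable section

/-- The norm `‖v‖_Q = (v* Q v)^{1/2}`. -/
def qnorm {N : ℕ} (Q : Mat N) (v : Fin N → ℂ) : ℝ := Real.sqrt (qf Q v)

/-- The operator norm on matrices induced by `‖·‖_Q`. -/
def opNormQ {N : ℕ} (Q M : Mat N) : ℝ :=
  sSup {r : ℝ | ∃ v : Fin N → ℂ, v ≠ 0 ∧ r = qnorm Q (M *ᵥ v) / qnorm Q v}

/-- Order of vanishing of `f` at `z`: the least `n` with `f⁽ⁿ⁾(z) ≠ 0`. -/
def vanishOrder (f : ℂ → ℂ) (z : ℂ) : ℕ := sInf {n : ℕ | iteratedDeriv n f z ≠ 0}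

open Filter Topology in
theorem ap_aux (z₀ : ℂ) (r : ℝ) (hr : 0 < r) (S : Finset ℂ) : ∀ (f : ℂ → ℂ),
    (S : Set ℂ) ⊆ ball z₀ r → AnalyticOnNhd ℂ f (closedBall z₀ r) →
    (∀ z ∈ closedBall z₀ r, z ∉ S → f z ≠ 0) →
    (∮ z in C(z₀, r), logDeriv f z) =
      2 * Real.pi * Complex.I * ((∑ a ∈ S, analyticOrderNatAt f a : ℕ) : ℂ) := by
  induction S using Finset.induction_on with
  | empty =>
    intro f _ hf h0
    simp only [Finset.sum_empty, Nat.cast_zero, mul_zero]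
    have hd : ∀ z ∈ closedBall z₀ r, DifferentiableAt ℂ (logDeriv f) z := fun z hz =>
      ((hf z hz).deriv.div (hf z hz) (h0 z hz (by simp))).differentiableAt
    refine Complex.circleIntegral_eq_zero_of_differentiable_on_off_countable hr.le
      Set.countable_empty ?_ ?_
    · exact fun z hz => (hd z hz).continuousAt.continuousWithinAt
    · exact fun z hz => hd z (ball_subset_closedBall hz.1)
  | insert a S haS ih =>
    intro f hS hf h0
    have ha : a ∈ ball z₀ r := hS (by simp)
    have ha' := ball_subset_closedBall ha
    have hS' : (S : Set ℂ) ⊆ ball z₀ r := fun x hx => hS (by simp [Finset.mem_coe.1 hx])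
    have hne : analyticOrderAt f a ≠ ⊤ := by
      intro htop
      rw [analyticOrderAt_eq_top] at htop
      have h1 : ∀ᶠ z in 𝓝[≠] a, f z = 0 := htop.filter_mono nhdsWithin_le_nhds
      have h2 : ∀ᶠ z in 𝓝[≠] a, z ∈ ball z₀ r :=
        nhdsWithin_le_nhds (isOpen_ball.mem_nhds ha)
      have h3 : ∀ᶠ z in 𝓝[≠] a, z ∉ S :=
        nhdsWithin_le_nhds (S.finite_toSet.isClosed.isOpen_compl.mem_nhds (by simpa using haS))
      obtain ⟨z, ⟨⟨hz1, hz2⟩, hz3⟩, hz4⟩ :=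
        (((h1.and h2).and h3).and (eventually_mem_nhdsWithin)).exists
      exact h0 z (ball_subset_closedBall hz2) (by simp [hz3]; exact hz4) hz1
    obtain ⟨h, hh, hha, hfh⟩ := ((hf a ha').analyticOrderAt_ne_top).1 hne
    set n := analyticOrderNatAt f a with hn
    set g : ℂ → ℂ := Function.update (fun z => f z / (z - a) ^ n) a (h a) with hg
    have hga : g a = h a := by simp [hg]
    have hgz : ∀ z, z ≠ a → g z = f z / (z - a) ^ n := fun z hz => by simp [hg, hz]
    have hgh : g =ᶠ[𝓝 a] h := by
      filter_upwards [hfh] with z hz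
      by_cases hza : z = a
      · rw [hza, hga]
      · have : z - a ≠ 0 := sub_ne_zero.2 hza
        rw [hgz z hza, hz, smul_eq_mul]; field_simp
    have hgn : ∀ z, z ≠ a → g =ᶠ[𝓝 z] fun z => f z / (z - a) ^ n := fun z hz => by
      filter_upwards [isOpen_ne.mem_nhds hz] with w hw using hgz w hw
    have hgan : AnalyticOnNhd ℂ g (closedBall z₀ r) := by
      intro z hz
      by_cases hza : z = a
      · rw [hza]; exact hh.congr hgh.symm
      · have hp : AnalyticAt ℂ (fun w : ℂ => (w - a) ^ n) z := by fun_prop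
        have hq : AnalyticAt ℂ (fun w : ℂ => f w / (w - a) ^ n) z :=
          (hf z hz).fun_div hp (pow_ne_zero _ (sub_ne_zero.2 hza))
        exact hq.congr (hgn z hza).symm
    have hg0 : ∀ z ∈ closedBall z₀ r, z ∉ S → g z ≠ 0 := by
      intro z hz hzS
      by_cases hza : z = a
      · rw [hza, hga]; exact hha
      · rw [hgz z hza]
        exact div_ne_zero (h0 z hz (by simp [hza, hzS])) (pow_ne_zero _ (sub_ne_zero.2 hza))
    have hfg : ∀ z, z ≠ a → f =ᶠ[𝓝 z] (fun w => (w - a) ^ n) * g := by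
      intro z hz
      filter_upwards [isOpen_ne.mem_nhds hz] with w hw
      have : w - a ≠ 0 := sub_ne_zero.2 hw
      simp only [Pi.mul_apply]
      rw [hgz w hw]; field_simp
    have hord : ∀ b ∈ S, analyticOrderNatAt f b = analyticOrderNatAt g b := by
      intro b hb
      have hba : b ≠ a := fun h => haS (h ▸ hb)
      unfold analyticOrderNatAt
      have hp : AnalyticAt ℂ (fun w : ℂ => (w - a) ^ n) b := by fun_prop
      rw [analyticOrderAt_congr (hfg b hba), analyticOrderAt_mul hp
        (hgan b (ball_subset_closedBall (hS' hb))),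
        hp.analyticOrderAt_eq_zero.2 (pow_ne_zero _ (sub_ne_zero.2 hba)), zero_add]
    have hsph : ∀ z ∈ sphere z₀ r, z ≠ a := by
      rintro z hz rfl
      rw [mem_sphere] at hz; rw [mem_ball] at ha; linarith
    have hlog : ∀ z ∈ sphere z₀ r, logDeriv f z = (n : ℂ) * (z - a)⁻¹ + logDeriv g z := by
      intro z hz
      have hza := hsph z hz
      have hzS : z ∉ S := fun h => by
        have := hS' h; rw [mem_ball] at this; rw [mem_sphere] at hz; linarith
      have hzc := sphere_subset_closedBall hz
      have e : logDeriv f z = logDeriv ((fun w => (w - a) ^ n) * g) z := by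
        rw [logDeriv_apply, logDeriv_apply, (hfg z hza).deriv_eq, (hfg z hza).eq_of_nhds]
      have e2 : logDeriv ((fun w => (w - a) ^ n) * g) z = logDeriv (fun w => (w - a) ^ n) z + logDeriv g z :=
        logDeriv_mul z (pow_ne_zero _ (sub_ne_zero.2 hza)) (hg0 z hzc hzS)
          (by fun_prop) (hgan z hzc).differentiableAt
      rw [e, e2, logDeriv_fun_pow (by fun_prop)]
      simp [logDeriv_apply]
    have hi1 : CircleIntegrable (fun z => (n : ℂ) * (z - a)⁻¹) z₀ r := by
      apply ContinuousOn.circleIntegrable hr.le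
      intro z hz
      have hza : z - a ≠ 0 := sub_ne_zero.2 (hsph z hz)
      have hc : ContinuousAt (fun w : ℂ => (n : ℂ) * (w - a)⁻¹) z := by fun_prop (disch := assumption)
      exact hc.continuousWithinAt
    have hi2 : CircleIntegrable (logDeriv g) z₀ r := by
      apply ContinuousOn.circleIntegrable hr.le
      intro z hz
      have hzS : z ∉ S := fun h => by
        have := hS' h; rw [mem_ball] at this; rw [mem_sphere] at hz; linarith
      have hzc := sphere_subset_closedBall hz
      exact ((hgan z hzc).deriv.div (hgan z hzc) (hg0 z hzc hzS)).continuousAt.continuousWithinAt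
    rw [circleIntegral.integral_congr hr.le hlog, circleIntegral.integral_add hi1 hi2,
      ih g hS' hgan hg0, circleIntegral.integral_const_mul,
      circleIntegral.integral_sub_inv_of_mem_ball ha, Finset.sum_insert haS,
      Finset.sum_congr rfl hord]
    push_cast
    ring

theorem vanishOrder_eq (f : ℂ → ℂ) (z : ℂ) (hf : AnalyticAt ℂ f z)
    (h : analyticOrderAt f z ≠ ⊤) : vanishOrder f z = analyticOrderNatAt f z := by
  have h1 : analyticOrderAt f z = (analyticOrderNatAt f z : ℕ) :=
    (Nat.cast_analyticOrderNatAt h).symm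
  obtain ⟨h2, h3⟩ := (analyticOrderAt_eq_nat_iff_iteratedDeriv_eq_zero hf).1 h1
  unfold vanishOrder
  apply le_antisymm
  · exact Nat.sInf_le h3
  · exact le_csInf ⟨_, h3⟩ fun k hk => by
      by_contra hlt
      exact hk (h2 k (not_le.1 hlt))

open Filter Topology in
theorem zeros_count (z₀ : ℂ) (r : ℝ) (hr : 0 < r) (f : ℂ → ℂ)
    (hf : AnalyticOnNhd ℂ f (closedBall z₀ r)) (h0 : ∀ z ∈ sphere z₀ r, f z ≠ 0) :
    Set.Finite {z ∈ ball z₀ r | f z = 0} ∧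
    (∮ z in C(z₀, r), logDeriv f z) = 2 * Real.pi * Complex.I *
      ((∑ᶠ z ∈ {z ∈ ball z₀ r | f z = 0}, vanishOrder f z : ℕ) : ℂ) := by
  have hpre : IsPreconnected (closedBall z₀ r) := (convex_closedBall z₀ r).isPreconnected
  obtain ⟨w, hw⟩ : (sphere z₀ r).Nonempty := NormedSpace.sphere_nonempty.2 hr.le
  have hnot : ∀ z ∈ closedBall z₀ r, ¬ ∃ᶠ x in 𝓝[≠] z, f x = 0 := fun z hz h =>
    h0 w hw (hf.eqOn_zero_of_preconnected_of_frequently_eq_zero hpre hz h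
      (sphere_subset_closedBall hw))
  have hfin : Set.Finite {z ∈ ball z₀ r | f z = 0} := by
    by_contra hinf
    obtain ⟨x, hx, hacc⟩ := Set.Infinite.exists_accPt_of_subset_isCompact hinf
      (isCompact_closedBall z₀ r) (fun z hz => ball_subset_closedBall hz.1)
    rw [accPt_iff_frequently_nhdsNE] at hacc
    exact hnot x hx (hacc.mono fun y hy => hy.2)
  refine ⟨hfin, ?_⟩
  rw [finsum_mem_eq_finite_toFinset_sum _ hfin]
  rw [ap_aux z₀ r hr hfin.toFinset f (by intro z hz; simp at hz; simpa using hz.1) hf ?_]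
  · congr 2
    refine Finset.sum_congr rfl fun z hz => ?_
    have hz' : z ∈ closedBall z₀ r := ball_subset_closedBall (by simp at hz; simpa using hz.1)
    refine (vanishOrder_eq f z (hf z hz') fun htop => ?_).symm
    rw [analyticOrderAt_eq_top] at htop
    exact hnot z hz' (htop.filter_mono nhdsWithin_le_nhds).frequently
  · intro z hz hzS hfz
    rcases (mem_closedBall.1 hz).lt_or_eq with h | h
    · exact hzS (by simpa [hfz] using h)
    · exact h0 z h hfz

theorem rouche_aux (z₀ : ℂ) (r : ℝ) (hr : 0 < r) (f g : ℂ → ℂ)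
    (hf : AnalyticOnNhd ℂ f (closedBall z₀ r)) (hg : AnalyticOnNhd ℂ g (closedBall z₀ r))
    (h : ∀ z ∈ sphere z₀ r, ‖f z - g z‖ < ‖g z‖) :
    (∮ z in C(z₀, r), logDeriv f z) = ∮ z in C(z₀, r), logDeriv g z := by
  have hg0 : ∀ z ∈ sphere z₀ r, g z ≠ 0 := fun z hz h0 => by
    have := h z hz; rw [h0, norm_zero] at this; exact absurd this (not_lt.2 (norm_nonneg _))
  have hf0 : ∀ z ∈ sphere z₀ r, f z ≠ 0 := fun z hz h0 => by
    have := h z hz; rw [h0, zero_sub, norm_neg] at this; exact lt_irrefl _ this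
  have hint : ∀ k : ℂ → ℂ, AnalyticOnNhd ℂ k (closedBall z₀ r) → (∀ z ∈ sphere z₀ r, k z ≠ 0) →
      CircleIntegrable (logDeriv k) z₀ r := by
    intro k hk hk0
    apply ContinuousOn.circleIntegrable hr.le
    intro z hz
    have hzc := sphere_subset_closedBall hz
    exact ((hk z hzc).deriv.div (hk z hzc) (hk0 z hz)).continuousAt.continuousWithinAt
  rw [← sub_eq_zero, ← circleIntegral.integral_sub (hint f hf hf0) (hint g hg hg0)]
  refine circleIntegral.integral_eq_zero_of_hasDerivWithinAt
    (f := fun z => Complex.log ((f / g) z)) hr.le fun z hz => ?_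
  have hzc := sphere_subset_closedBall hz
  have hslit : (f / g) z ∈ Complex.slitPlane := by
    apply Complex.ball_one_subset_slitPlane
    have hgz := hg0 z hz
    rw [mem_ball, dist_eq_norm, Pi.div_apply,
      show f z / g z - 1 = (f z - g z) / g z by field_simp, norm_div,
      div_lt_one (norm_pos_iff.2 hgz)]
    exact h z hz
  have hd : DifferentiableAt ℂ (f / g) z :=
    (hf z hzc).differentiableAt.div (hg z hzc).differentiableAt (hg0 z hz)
  have := (hd.hasDerivAt.clog hslit).hasDerivWithinAt (s := sphere z₀ r)
  rwa [← logDeriv_apply, show logDeriv (f / g) z = logDeriv f z - logDeriv g z from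
    logDeriv_div z (hf0 z hz) (hg0 z hz) (hf z hzc).differentiableAt
      (hg z hzc).differentiableAt] at this

theorem qnorm_pos {N : ℕ} {Q : Mat N} (hQ : Q.PosDef) {v : Fin N → ℂ} (hv : v ≠ 0) :
    0 < qnorm Q v := by
  have := hQ.dotProduct_mulVec_pos hv
  exact Real.sqrt_pos.2 (Complex.pos_iff.1 this).1

theorem qnorm_smul {N : ℕ} (Q : Mat N) (c : ℝ) (hc : 0 ≤ c) (v : Fin N → ℂ) :
    qnorm Q ((c : ℂ) • v) = c * qnorm Q v := by
  unfold qnorm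
  have : qf Q ((c : ℂ) • v) = c ^ 2 * qf Q v := by
    unfold qf
    rw [star_smul, mulVec_smul, smul_dotProduct, dotProduct_smul, smul_smul]
    simp [-Complex.ofReal_mul, ← Complex.ofReal_mul, sq]
  rw [this, Real.sqrt_mul (sq_nonneg c), Real.sqrt_sq hc]

theorem qnorm_neg {N : ℕ} (Q : Mat N) (v : Fin N → ℂ) : qnorm Q (-v) = qnorm Q v := by
  simp [qnorm, qf, mulVec_neg]

theorem continuous_qnorm {N : ℕ} (Q M : Mat N) : Continuous fun v => qnorm Q (M *ᵥ v) := by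
  unfold qnorm qf
  fun_prop

theorem le_opNormQ {N : ℕ} {Q : Mat N} (hQ : Q.PosDef) (M : Mat N) {v : Fin N → ℂ} (hv : v ≠ 0) :
    qnorm Q (M *ᵥ v) ≤ opNormQ Q M * qnorm Q v := by
  rw [← div_le_iff₀ (qnorm_pos hQ hv)]
  refine le_csSup ?_ ⟨v, hv, rfl⟩
  have hc : ContinuousOn (fun v => qnorm Q (M *ᵥ v) / qnorm Q v) (sphere (0 : Fin N → ℂ) 1) := by
    refine (continuous_qnorm Q M).continuousOn.div ?_ ?_
    · simpa using (continuous_qnorm Q 1).continuousOn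
    · intro v hv
      exact (qnorm_pos hQ (ne_zero_of_mem_unit_sphere ⟨v, hv⟩)).ne'
  obtain ⟨C, hC⟩ := ((isCompact_sphere (0 : Fin N → ℂ) 1).image_of_continuousOn hc).bddAbove
  refine ⟨C, ?_⟩
  rintro _ ⟨w, hw, rfl⟩
  have hwn : 0 < ‖w‖ := norm_pos_iff.2 hw
  have hmem : ((‖w‖⁻¹ : ℝ) : ℂ) • w ∈ sphere (0 : Fin N → ℂ) 1 := by
    rw [mem_sphere_zero_iff_norm, norm_smul]
    simp [hwn.ne']
  have := hC ⟨_, hmem, rfl⟩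
  simp only [mulVec_smul] at this
  rwa [qnorm_smul _ _ (by positivity), qnorm_smul _ _ (by positivity),
    mul_div_mul_left _ _ (by positivity)] at this

theorem det_ne {N : ℕ} (A B : Mat N) (hA : IsUnit A) (Q : Mat N) (hQ : Q.PosDef)
    (h : opNormQ Q (A⁻¹ * (B - A)) < 1) (t : ℝ) (ht : t ∈ Set.Icc (0 : ℝ) 1) :
    det (A + (t : ℂ) • (B - A)) ≠ 0 := by
  intro hdet
  obtain ⟨v, hv, hv0⟩ := exists_mulVec_eq_zero_iff.2 hdet
  have hdA : IsUnit A.det := (isUnit_iff_isUnit_det A).1 hA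
  have h1 : v + (t : ℂ) • ((A⁻¹ * (B - A)) *ᵥ v) = 0 := by
    have := congrArg (fun w => A⁻¹ *ᵥ w) hv0
    simp only [mulVec_mulVec, add_mulVec, mulVec_add, mulVec_smul, nonsing_inv_mul _ hdA,
      smul_mulVec, one_mulVec, mulVec_zero] at this
    exact this
  have h2 : v = -((t : ℂ) • ((A⁻¹ * (B - A)) *ᵥ v)) := eq_neg_of_add_eq_zero_left h1
  have h3 : qnorm Q v = t * qnorm Q ((A⁻¹ * (B - A)) *ᵥ v) := by
    conv_lhs => rw [h2]
    rw [qnorm_neg, qnorm_smul _ _ ht.1]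
  have h4 := le_opNormQ hQ (A⁻¹ * (B - A)) hv
  have h5 := qnorm_pos hQ hv
  have h6 : 0 ≤ qnorm Q ((A⁻¹ * (B - A)) *ᵥ v) := Real.sqrt_nonneg _
  nlinarith [ht.1, ht.2]

theorem cont_aux {N : ℕ} {X : Type*} [TopologicalSpace X] (A B : X → Mat N) (t : X → ℂ)
    (hA : ∀ i j, Continuous fun x => A x i j) (hB : ∀ i j, Continuous fun x => B x i j)
    (ht : Continuous t) : Continuous fun x => det (A x + t x • (B x - A x)) := by
  refine Continuous.matrix_det (continuous_matrix fun i j => ?_)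
  simp only [Matrix.add_apply, Matrix.smul_apply, Matrix.sub_apply, smul_eq_mul]
  exact (hA i j).add (ht.mul ((hB i j).sub (hA i j)))

/-- if `A, B` are analytic matrix-valued functions on an open `U ⊇ D̄`, `A` is
invertible on `∂D` and `‖A⁻¹(B − A)‖_Q < 1` on `∂D` for some `Q ≻ 0` (depending on the
point), then `det∘A` and `det∘B` are zero-free on `∂D`, have finitely many zeros in `D`,
and have the same number of zeros in `D` counted with multiplicity. -/
theorem stmt7 {N : ℕ} (U : Set ℂ) (hU : IsOpen U)
    (A B : ℂ → Mat N)
    (hA : ∀ i j, AnalyticOn ℂ (fun z => A z i j) U)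
    (hB : ∀ i j, AnalyticOn ℂ (fun z => B z i j) U)
    (z₀ : ℂ) (r : ℝ) (hr : 0 < r) (hDU : closedBall z₀ r ⊆ U)
    (hbd : ∀ lam ∈ sphere z₀ r, IsUnit (A lam) ∧
      ∃ Q : Mat N, Q.PosDef ∧ opNormQ Q ((A lam)⁻¹ * (B lam - A lam)) < 1) :
    (∀ lam ∈ sphere z₀ r, det (A lam) ≠ 0 ∧ det (B lam) ≠ 0) ∧
    Set.Finite {z ∈ ball z₀ r | det (A z) = 0} ∧
    Set.Finite {z ∈ ball z₀ r | det (B z) = 0} ∧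
    (∑ᶠ z ∈ {z ∈ ball z₀ r | det (A z) = 0}, vanishOrder (fun w => det (A w)) z)
      = ∑ᶠ z ∈ {z ∈ ball z₀ r | det (B z) = 0}, vanishOrder (fun w => det (B w)) z := by
  have hA' : ∀ i j, AnalyticOnNhd ℂ (fun z => A z i j) (closedBall z₀ r) := fun i j =>
    ((hU.analyticOn_iff_analyticOnNhd).1 (hA i j)).mono hDU
  have hB' : ∀ i j, AnalyticOnNhd ℂ (fun z => B z i j) (closedBall z₀ r) := fun i j =>
    ((hU.analyticOn_iff_analyticOnNhd).1 (hB i j)).mono hDU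
  set F : ℝ → ℂ → ℂ := fun t z => det (A z + (t : ℂ) • (B z - A z)) with hF
  have hFan : ∀ t, AnalyticOnNhd ℂ (F t) (closedBall z₀ r) := by
    intro t z hz
    simp only [hF, det_apply, Matrix.add_apply, Matrix.smul_apply, Matrix.sub_apply, smul_eq_mul]
    refine Finset.analyticAt_fun_sum _ fun σ _ => ?_
    simp only [Units.smul_def, zsmul_eq_mul]
    refine analyticAt_const.fun_mul ?_
    refine Finset.analyticAt_fun_prod _ fun i _ => ?_
    exact (hA' _ _ z hz).fun_add (analyticAt_const.fun_mul ((hB' _ _ z hz).fun_sub (hA' _ _ z hz)))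
  have hF0 : ∀ t ∈ Set.Icc (0 : ℝ) 1, ∀ z ∈ sphere z₀ r, F t z ≠ 0 := by
    intro t ht z hz
    obtain ⟨h1, Q, hQ, h2⟩ := hbd z hz
    exact det_ne _ _ h1 Q hQ h2 t ht
  have hcont : Continuous fun p : unitInterval × sphere z₀ r => F p.1 p.2 := by
    have hAc : ∀ i j, Continuous fun p : sphere z₀ r => A p i j := fun i j =>
      continuousOn_iff_continuous_domRestrict.1
        ((hA' i j).continuousOn.mono sphere_subset_closedBall)
    have hBc : ∀ i j, Continuous fun p : sphere z₀ r => B p i j := fun i j =>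
      continuousOn_iff_continuous_domRestrict.1
        ((hB' i j).continuousOn.mono sphere_subset_closedBall)
    exact cont_aux (fun p : unitInterval × sphere z₀ r => A p.2) (fun p => B p.2)
      (fun p => ((p.1 : ℝ) : ℂ)) (fun i j => (hAc i j).comp continuous_snd)
      (fun i j => (hBc i j).comp continuous_snd)
      (Complex.continuous_ofReal.comp (continuous_subtype_val.comp continuous_fst))
  have hloc : IsLocallyConstant fun t : unitInterval => ∮ z in C(z₀, r), logDeriv (F t) z := by
    rw [IsLocallyConstant.iff_eventually_eq]
    intro t
    have : ∀ᶠ s : unitInterval in nhds t, ∀ z ∈ (Set.univ : Set (sphere z₀ r)),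
        ‖F s z - F t z‖ < ‖F t z‖ := by
      refine isCompact_univ.eventually_forall_of_forall_eventually
        (P := fun (s : unitInterval) (z : sphere z₀ r) => ‖F s z - F t z‖ < ‖F t z‖) fun z _ => ?_
      have hc2 : Continuous fun p : unitInterval × sphere z₀ r => F t p.2 :=
        hcont.comp (by fun_prop : Continuous fun p : unitInterval × sphere z₀ r => (t, p.2))
      refine ((hcont.sub hc2).norm.continuousAt).eventually_lt hc2.norm.continuousAt ?_
      simpa using hF0 t t.2 z z.2
    filter_upwards [this] with s hs
    exact rouche_aux z₀ r hr _ _ (hFan s) (hFan t) fun z hz => hs ⟨z, hz⟩ trivial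
  have hI := hloc.apply_eq_of_preconnectedSpace 0 1
  have hFA : F (0 : unitInterval) = fun w => det (A w) := by ext z; simp [hF]
  have hFB : F (1 : unitInterval) = fun w => det (B w) := by ext z; simp [hF]
  have cA := zeros_count z₀ r hr _ (hFan _) (hF0 _ (0 : unitInterval).2)
  have cB := zeros_count z₀ r hr _ (hFan _) (hF0 _ (1 : unitInterval).2)
  have nA := hF0 _ (0 : unitInterval).2
  have nB := hF0 _ (1 : unitInterval).2
  simp only [hFA, hFB] at hI cA cB nA nB
  refine ⟨fun z hz => ⟨nA z hz, nB z hz⟩, cA.1, cB.1, ?_⟩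
  rw [cA.2, cB.2] at hI
  exact_mod_cast mul_left_cancel₀ Complex.two_pi_I_ne_zero hI

end
end

section
/- Let N ≥ 2 and, for each M, let Ĉ_M ∈ M_N be the block matrix with upper-left (N−1)×(N−1) block Â_M, upper-right column b_M ∈ ℂ^{N−1}, lower-left row c_M* (c_M ∈ ℂ^{N−1}), and lower-right scalar ε_M. Suppose Â_M → A with A invertible, b_M → 0, c_M → 0, ε_M → 0, and that the Schur complement ε'_M := ε_M − c_M* Â_M⁻¹ b_M is nonzero for every M. Then each Ĉ_M is invertible and ε'_M · Ĉ_M⁻¹ converges, as M → ∞, to the matrix E ∈ M_N whose (N,N) entry is 1 and all other entries are 0. -/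
open Matrix Filter Topology

noncomputable section

/-- Explicit (scaled) inverse of a block matrix through the Schur complement. -/
theorem schur_mul {n : ℕ} (A : Matrix (Fin n) (Fin n) ℂ) (hA : IsUnit A)
    (B : Matrix (Fin n) Unit ℂ) (C : Matrix Unit (Fin n) ℂ) (D : Matrix Unit Unit ℂ) (e : ℂ)
    (he : D - C * A⁻¹ * B = e • (1 : Matrix Unit Unit ℂ)) :
    fromBlocks A B C D * fromBlocks (e • A⁻¹ + A⁻¹ * B * (C * A⁻¹)) (-(A⁻¹ * B)) (-(C * A⁻¹)) 1
      = e • (1 : Matrix (Fin n ⊕ Unit) (Fin n ⊕ Unit) ℂ) := by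
  have h1 : A * A⁻¹ = 1 := mul_nonsing_inv A ((isUnit_iff_isUnit_det A).1 hA)
  have hD : D = e • (1 : Matrix Unit Unit ℂ) + C * A⁻¹ * B := by rw [← he]; abel
  rw [fromBlocks_multiply, ← fromBlocks_one, fromBlocks_smul]
  congr 1
  · rw [Matrix.mul_add, Matrix.mul_smul, h1, Matrix.mul_assoc A⁻¹, ← Matrix.mul_assoc A, h1]
    simp
  · rw [Matrix.mul_neg, ← Matrix.mul_assoc, h1]
    simp
  · rw [hD]
    simp [Matrix.mul_add, Matrix.add_mul, Matrix.mul_assoc]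
  · rw [hD]
    simp [Matrix.mul_assoc]

/-- Matrix-valued form of the theorem. -/
theorem schur_tendsto {n : ℕ}
    (A : Matrix (Fin n) (Fin n) ℂ) (hA : IsUnit A)
    (AM : ℕ → Matrix (Fin n) (Fin n) ℂ) (hAMinv : ∀ M, IsUnit (AM M))
    (B : ℕ → Matrix (Fin n) Unit ℂ) (C : ℕ → Matrix Unit (Fin n) ℂ)
    (D : ℕ → Matrix Unit Unit ℂ) (e : ℕ → ℂ)
    (hAconv : Tendsto AM atTop (𝓝 A))
    (hB : Tendsto B atTop (𝓝 0)) (hC : Tendsto C atTop (𝓝 0))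
    (hD : Tendsto D atTop (𝓝 0))
    (hs : ∀ M, D M - C M * (AM M)⁻¹ * B M = e M • (1 : Matrix Unit Unit ℂ))
    (hne : ∀ M, e M ≠ 0) :
    (∀ M, IsUnit (fromBlocks (AM M) (B M) (C M) (D M))) ∧
    Tendsto (fun M => e M • (fromBlocks (AM M) (B M) (C M) (D M))⁻¹) atTop
      (𝓝 (fromBlocks (0 : Matrix (Fin n) (Fin n) ℂ) 0 0 (1 : Matrix Unit Unit ℂ))) := by
  have key := fun M => schur_mul (AM M) (hAMinv M) (B M) (C M) (D M) (e M) (hs M)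
  have hu : ∀ M, IsUnit (fromBlocks (AM M) (B M) (C M) (D M)) := by
    intro M
    have h := congrArg (fun X => (e M)⁻¹ • X) (key M)
    simp only [smul_smul, inv_mul_cancel₀ (hne M), one_smul] at h
    rw [← Matrix.mul_smul] at h
    exact (isUnit_iff_isUnit_det _).2 (isUnit_det_of_right_inverse h)
  refine ⟨hu, ?_⟩
  have hinv : Tendsto (fun M => (AM M)⁻¹) atTop (𝓝 A⁻¹) := by
    have hdet : A.det ≠ 0 := ((isUnit_iff_isUnit_det A).1 hA).ne_zero
    have hc : ContinuousAt Ring.inverse A.det := by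
      rw [Ring.inverse_eq_inv']
      exact continuousAt_inv₀ hdet
    exact (continuousAt_matrix_inv A hc).tendsto.comp hAconv
  have hmul : ∀ {l m k : Type} [Fintype m] {X : ℕ → Matrix l m ℂ} {Y : ℕ → Matrix m k ℂ}
      {x : Matrix l m ℂ} {y : Matrix m k ℂ}, Tendsto X atTop (𝓝 x) → Tendsto Y atTop (𝓝 y) →
      Tendsto (fun M => X M * Y M) atTop (𝓝 (x * y)) := by
    intro l m k _ X Y x y hX hY
    refine tendsto_pi_nhds.2 fun i => tendsto_pi_nhds.2 fun j => ?_
    simp only [Matrix.mul_apply]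
    refine tendsto_finsetSum _ fun a _ => ?_
    exact (tendsto_pi_nhds.1 (tendsto_pi_nhds.1 hX i) a).mul
      (tendsto_pi_nhds.1 (tendsto_pi_nhds.1 hY a) j)
  have hAB := hmul hinv hB
  have hCA := hmul hC hinv
  have he : Tendsto e atTop (𝓝 0) := by
    have h2 := tendsto_pi_nhds.1 (tendsto_pi_nhds.1 (hD.sub (hmul hCA hB)) ()) ()
    simp only [Matrix.mul_zero, sub_zero] at h2
    refine h2.congr fun M => ?_
    rw [hs M]
    simp
  have hG := (he.smul hinv).add (hmul hAB hCA)
  have hcont : Continuous (fun p : Matrix (Fin n) (Fin n) ℂ × Matrix (Fin n) Unit ℂ ×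
      Matrix Unit (Fin n) ℂ => fromBlocks p.1 p.2.1 p.2.2 (1 : Matrix Unit Unit ℂ)) :=
    Continuous.matrix_fromBlocks continuous_fst (continuous_fst.comp continuous_snd)
      (continuous_snd.comp continuous_snd) continuous_const
  have hfin := (hcont.tendsto _).comp (hG.prodMk_nhds (hAB.neg.prodMk_nhds hCA.neg))
  simp only [Matrix.mul_zero, Matrix.zero_mul, zero_smul, add_zero, neg_zero] at hfin
  refine hfin.congr fun M => ?_
  have h := congrArg (fun X => (fromBlocks (AM M) (B M) (C M) (D M))⁻¹ * X) (key M)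
  rw [nonsing_inv_mul_cancel_left _ _ ((isUnit_iff_isUnit_det _).1 (hu M)), Matrix.mul_smul,
    Matrix.mul_one] at h
  exact h

/-- if `Ĉ_M = [[Â_M, b_M], [c_M*, ε_M]]` with `Â_M → A` invertible,
`b_M, c_M, ε_M → 0`, each `Â_M` invertible, and the Schur complements
`ε'_M = ε_M − c_M* Â_M⁻¹ b_M` nonzero, then each `Ĉ_M` is invertible and
`ε'_M · Ĉ_M⁻¹` converges to the matrix with a single `1` in the lower-right corner.
(The `N×N` matrices, `N = n+1 ≥ 2`, are indexed by `Fin n ⊕ Unit`.) -/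
theorem stmt11 {n : ℕ} (hn : 1 ≤ n)
    (A : Matrix (Fin n) (Fin n) ℂ) (hA : IsUnit A)
    (AM : ℕ → Matrix (Fin n) (Fin n) ℂ) (hAMinv : ∀ M, IsUnit (AM M))
    (bM cM : ℕ → Fin n → ℂ) (εM : ℕ → ℂ)
    (hAconv : Tendsto AM atTop (𝓝 A))
    (hbconv : Tendsto bM atTop (𝓝 0))
    (hcconv : Tendsto cM atTop (𝓝 0))
    (hεconv : Tendsto εM atTop (𝓝 0))
    (hschur : ∀ M, εM M - star (cM M) ⬝ᵥ (AM M)⁻¹ *ᵥ bM M ≠ 0) :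
    (∀ M, IsUnit (Matrix.fromBlocks (AM M) (fun i (_ : Unit) => bM M i)
        (fun (_ : Unit) j => star (cM M j)) (fun _ _ => εM M))) ∧
    Tendsto (fun M => (εM M - star (cM M) ⬝ᵥ (AM M)⁻¹ *ᵥ bM M) •
        (Matrix.fromBlocks (AM M) (fun i (_ : Unit) => bM M i)
          (fun (_ : Unit) j => star (cM M j)) (fun _ _ => εM M))⁻¹)
      atTop
      (𝓝 (Matrix.fromBlocks (0 : Matrix (Fin n) (Fin n) ℂ) 0 0
            (fun (_ : Unit) (_ : Unit) => (1 : ℂ)))) := by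
  have hB : Tendsto (fun M => Matrix.of (fun i (_ : Unit) => bM M i)) atTop
      (𝓝 0) := by
    refine tendsto_pi_nhds.2 fun i => tendsto_pi_nhds.2 fun _ => ?_
    exact (tendsto_pi_nhds.1 hbconv) i
  have hC : Tendsto (fun M => Matrix.of (fun (_ : Unit) j => star (cM M j)))
      atTop (𝓝 0) := by
    refine tendsto_pi_nhds.2 fun _ => tendsto_pi_nhds.2 fun j => ?_
    simpa using ((tendsto_pi_nhds.1 hcconv) j).star
  have hD : Tendsto (fun M => Matrix.of (fun (_ : Unit) (_ : Unit) => εM M)) atTop (𝓝 0) := by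
    refine tendsto_pi_nhds.2 fun _ => tendsto_pi_nhds.2 fun _ => ?_
    exact hεconv
  have hone : Matrix.of (fun (_ : Unit) (_ : Unit) => (1 : ℂ)) = (1 : Matrix Unit Unit ℂ) := by
    ext i j
    simp
  have hfin := schur_tendsto A hA AM hAMinv _ _ _
    (fun M => εM M - star (cM M) ⬝ᵥ (AM M)⁻¹ *ᵥ bM M) hAconv hB hC hD (by
      intro M
      ext i j
      rw [Matrix.mul_assoc]
      simp [Matrix.mul_apply, dotProduct, mulVec]) hschur
  rw [← hone] at hfin
  exact hfin

end
end

section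
/- Let Σ_X ∈ M_N be real symmetric positive definite, Σ_ξ ∈ M_N real symmetric positive semidefinite, and R ∈ M_N invertible. Define the ℂ-linear map T : M_N → M_N by T[Q] := tr(Σ_X Q)·( Σ_X⁻¹ + Σ_X⁻¹ R* Σ_ξ R Σ_X⁻¹ ) + Qᵀ. Then the spectral radius of T (the largest modulus of an eigenvalue of T as a ℂ-linear endomorphism of M_N) equals N + 1 + tr( Σ_ξ R Σ_X⁻¹ R* ). -/
open Matrix ComplexOrder

noncomputable section

/-- The map `T[Q] := tr(Σ_X Q)·(Σ_X⁻¹ + Σ_X⁻¹ R* Σ_ξ R Σ_X⁻¹) + Qᵀ`. -/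
def Tmap {N : ℕ} (SX Sxi R : Mat N) : Module.End ℂ (Mat N) where
  toFun Q := Matrix.trace (SX * Q) • (SX⁻¹ + SX⁻¹ * Rᴴ * Sxi * R * SX⁻¹) + Qᵀ
  map_add' Q Q' := by
    simp [Matrix.mul_add, Matrix.trace_add, add_smul, Matrix.transpose_add]
    abel
  map_smul' a Q := by
    simp [Matrix.mul_smul, Matrix.trace_smul, smul_smul, Matrix.transpose_smul, smul_add]

/-- for `Σ_X` real symmetric positive definite, `Σ_ξ` real symmetric
positive semidefinite and `R` invertible, the spectral radius of `T` equals
`N + 1 + tr(Σ_ξ R Σ_X⁻¹ R*)`. -/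
theorem stmt13 {N : ℕ} (hN : 0 < N) (SX Sxi R : Mat N)
    (hSX : SX.PosDef) (hSXreal : ∀ i j, (SX i j).im = 0)
    (hSxi : Sxi.PosSemidef) (hSxireal : ∀ i j, (Sxi i j).im = 0)
    (hR : IsUnit R) :
    (specRad (Tmap SX Sxi R) : ℂ)
      = (N : ℂ) + 1 + Matrix.trace (Sxi * R * SX⁻¹ * Rᴴ) := by
  have hdet : IsUnit SX.det := (Matrix.isUnit_iff_isUnit_det SX).1 hSX.isUnit
  have hsym : SXᵀ = SX := by
    ext i j
    have h := hSX.isHermitian.apply i j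
    rw [Matrix.transpose_apply, ← h]
    exact (Complex.conj_eq_iff_im.2 (hSXreal j i)).symm
  set d : ℂ := Matrix.trace (Sxi * R * SX⁻¹ * Rᴴ) with hd
  have hd0 : 0 ≤ d := by
    obtain ⟨C, hC⟩ : ∃ C : Mat N, SX⁻¹ = Cᴴ * C :=
      (by
        open scoped MatrixOrder in
        exact CStarAlgebra.nonneg_iff_eq_star_mul_self.1 hSX.inv.posSemidef.nonneg)
    have h1 : d = Matrix.trace ((C * Rᴴ) * Sxi * (C * Rᴴ)ᴴ) := by
      rw [hd, hC, Matrix.conjTranspose_mul, Matrix.conjTranspose_conjTranspose]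
      rw [show Sxi * R * (Cᴴ * C) * Rᴴ = Sxi * R * Cᴴ * (C * Rᴴ) by
        simp only [Matrix.mul_assoc]] 
      rw [Matrix.trace_mul_comm]
      simp only [Matrix.mul_assoc]
    rw [h1]
    exact (hSxi.mul_mul_conjTranspose_same _).trace_nonneg
  set A : Mat N := SX⁻¹ + SX⁻¹ * Rᴴ * Sxi * R * SX⁻¹ with hA
  have hT : ∀ Q, Tmap SX Sxi R Q = Matrix.trace (SX * Q) • A + Qᵀ := fun Q => rfl
  have htrT : ∀ Q : Mat N, Matrix.trace (SX * Qᵀ) = Matrix.trace (SX * Q) := by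
    intro Q
    rw [← Matrix.trace_transpose, Matrix.transpose_mul, Matrix.transpose_transpose, hsym,
      Matrix.trace_mul_comm]
  have hc : Matrix.trace (SX * A) = N + d := by
    rw [hA, Matrix.mul_add, Matrix.mul_nonsing_inv _ hdet, Matrix.trace_add, Matrix.trace_one,
      Fintype.card_fin, hd]
    congr 1
    have h2 : SX * (SX⁻¹ * Rᴴ * Sxi * R * SX⁻¹) = Rᴴ * (Sxi * R * SX⁻¹) := by
      rw [← Matrix.one_mul (Rᴴ * (Sxi * R * SX⁻¹)), ← Matrix.mul_nonsing_inv _ hdet]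
      simp only [Matrix.mul_assoc]
    rw [h2, Matrix.trace_mul_comm]
  obtain ⟨x, hx0, hxd⟩ : ∃ x : ℝ, 0 ≤ x ∧ d = (x : ℂ) := by
    obtain ⟨h1, h2⟩ := Complex.le_def.1 hd0
    exact ⟨d.re, by simpa using h1, Complex.ext (by simp) (by simpa using h2.symm)⟩
  have hN1 : (1 : ℝ) ≤ N := by exact_mod_cast hN
  have hmain : specRad (Tmap SX Sxi R) = (N : ℝ) + 1 + x := by
    apply IsGreatest.csSup_eq
    constructor
    · refine ⟨((N + 1 + x : ℝ) : ℂ), ?_, ?_⟩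
      · set m : ℂ := ((N + 1 + x : ℝ) : ℂ) with hm
        have hmd : (N : ℂ) + d = m - 1 := by rw [hm, hxd]; push_cast; ring
        have htr : Matrix.trace (SX * (m • A + Aᵀ)) = m ^ 2 - 1 := by
          rw [Matrix.mul_add, Matrix.trace_add, htrT, Matrix.mul_smul, Matrix.trace_smul, hc, hmd,
            smul_eq_mul]
          ring
        apply Module.End.hasEigenvalue_of_hasEigenvector (x := m • A + Aᵀ)
        refine ⟨Module.End.mem_eigenspace_iff.2 ?_, ?_⟩
        · rw [hT, htr, Matrix.transpose_add, Matrix.transpose_smul, Matrix.transpose_transpose]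
          module
        · intro h0
          rw [h0, Matrix.mul_zero, Matrix.trace_zero] at htr
          have h3 : ((N + 1 + x : ℝ)) ^ 2 - 1 = 0 := by
            rw [hm] at htr
            exact_mod_cast htr.symm
          nlinarith
      · rw [Complex.norm_real, Real.norm_eq_abs, abs_of_nonneg (by positivity)]
    · rintro r ⟨m, hm, rfl⟩
      obtain ⟨Q, hQ⟩ := hm.exists_hasEigenvector
      have hQ1 := hQ.apply_eq_smul
      have hQ0 : Q ≠ 0 := hQ.2
      rw [hT] at hQ1
      have h4 := congrArg (fun M => Matrix.trace (SX * M)) hQ1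
      simp only [Matrix.mul_add, Matrix.trace_add, htrT, Matrix.mul_smul, Matrix.trace_smul, hc,
        smul_eq_mul] at h4
      by_cases ht : Matrix.trace (SX * Q) = 0
      · rw [ht, zero_smul, zero_add] at hQ1
        have h5 : Q = (m * m) • Q := by
          conv_lhs => rw [← Matrix.transpose_transpose Q, hQ1, Matrix.transpose_smul, hQ1]
          rw [smul_smul]
        have h6 : m * m = 1 := by
          have : (m * m - 1) • Q = 0 := by rw [sub_smul, one_smul, ← h5, sub_self]
          rcases smul_eq_zero.1 this with h | h
          · linear_combination h
          · exact absurd h hQ0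
        have h7 : ‖m‖ * ‖m‖ = 1 := by rw [← norm_mul, h6, norm_one]
        nlinarith [norm_nonneg m]
      · have h8 : m = ((N + 1 + x : ℝ) : ℂ) := by
          apply mul_right_cancel₀ ht
          rw [← h4, hxd]
          push_cast
          ring
        rw [h8, Complex.norm_real, Real.norm_eq_abs, abs_of_nonneg (by positivity)]
  rw [hmain, hxd]
  push_cast
  ring


end
end
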